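/- arXiv:1010.0751 — 3 statements merged into one kernel-verified Lean document; each statement's English description precedes it below -/
import Mathlib

section
/- Let β be an irrational real number and λ1, λ2, λ3 ≥ 0 with (λ1, λ3) ≠ (0, 0). Define L_M := log((1 + √(1 − 4λ1λ3))/2) if 4λ1λ3 ≤ 1 and L_M := (1/2)·log(λ1λ3) if 4λ1λ3 > 1. Then for every E ∈ ℝ there exists ε₀ > 0 such that for all real ε with |ε| > ε₀, the complexified Lyapunov exponent of the extended Harper transfer-matrix cocycle satisfies L(β, A^E_ε) = L_M + 2π|ε|. -/
open MeasureTheory Filter Complex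
open scoped ENNReal Real NNReal

noncomputable section

attribute [local instance] Matrix.frobeniusNormedAddCommGroup

/-- The `n`-step cocycle iterate `D^{(n)}_β(x) = D(x+(n-1)β)⋯D(x)`. -/
def cocycleIter (D : ℝ → Matrix (Fin 2) (Fin 2) ℂ) (β : ℝ) : ℕ → ℝ → Matrix (Fin 2) (Fin 2) ℂ
  | 0, _ => 1
  | n + 1, x => cocycleIter D β n (x + β) * D x

/-- The extended-real-valued integral `∫₀¹ log (g x) dx`, with value `-∞` allowed
(the positive and negative parts are integrated separately; `log 0 = -∞`). -/
def logIntegral (g : ℝ → ℝ) : EReal :=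
  ((∫⁻ x in Set.Ioc (0 : ℝ) 1, ENNReal.ofReal (Real.log (g x))) : EReal) -
    ((∫⁻ x in Set.Ioc (0 : ℝ) 1,
        if g x = 0 then (⊤ : ℝ≥0∞) else ENNReal.ofReal (-Real.log (g x))) : EReal)

/-- The Lyapunov exponent `L(β, D) = inf_{n ≥ 1} (1/n) ∫₀¹ log ‖D^{(n)}_β(x)‖ dx ∈ ℝ ∪ {-∞}`. -/
def lyapunov (β : ℝ) (D : ℝ → Matrix (Fin 2) (Fin 2) ℂ) : EReal :=
  ⨅ n : ℕ, ((((n : ℝ) + 1)⁻¹ : ℝ) : EReal) * logIntegral fun x => ‖cocycleIter D β (n + 1) x‖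

/-- `c(z) = λ₃ e^{-2πi(z+β/2)} + λ₂ + λ₁ e^{2πi(z+β/2)}` of extended Harper's model. -/
def harperC (lam1 lam2 lam3 β : ℝ) (z : ℂ) : ℂ :=
  (lam3 : ℂ) * Complex.exp (-(2 * (π : ℂ) * Complex.I) * (z + (β : ℂ) / 2)) + (lam2 : ℂ) +
    (lam1 : ℂ) * Complex.exp ((2 * (π : ℂ) * Complex.I) * (z + (β : ℂ) / 2))

/-- `c̃(z) = λ₃ e^{2πi(z+β/2)} + λ₂ + λ₁ e^{-2πi(z+β/2)}`, the entire extension of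
`x ↦ conj (c x)` from `ℝ`. -/
def harperCt (lam1 lam2 lam3 β : ℝ) (z : ℂ) : ℂ :=
  (lam3 : ℂ) * Complex.exp ((2 * (π : ℂ) * Complex.I) * (z + (β : ℂ) / 2)) + (lam2 : ℂ) +
    (lam1 : ℂ) * Complex.exp (-(2 * (π : ℂ) * Complex.I) * (z + (β : ℂ) / 2))

/-- The transfer matrix `A^E(z) = [[E - 2cos(2πz), -c̃(z-β)], [c(z), 0]]`. -/
def harperA (lam1 lam2 lam3 β : ℝ) (E : ℂ) (z : ℂ) : Matrix (Fin 2) (Fin 2) ℂ :=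
  !![E - 2 * Complex.cos (2 * (π : ℂ) * z), -harperCt lam1 lam2 lam3 β (z - (β : ℂ));
     harperC lam1 lam2 lam3 β z, 0]

/-!
Put `w = exp (2πi(x + iε))`. Then `A^E(x + iε) = w⁻¹ B(w)` with `B` a matrix polynomial, and for
large `ε > 0` the point `w` runs through a small circle around `0`. The Lyapunov exponent is
therefore `2πε` plus that of the skew product of `B` over the rotation by `q = exp (2πiβ)`, and it
has to be shown that the latter is `log ρ`, with `ρ` the spectral radius of `B(0)`.

The lower bound is Jensen's inequality applied to the products `B(q^(n-1) w) ⋯ B(w)`, whose value at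
`w = 0` is `B(0)^n`. For the upper bound, solve the functional equation
`H(u, w) = 1 + u H(u, q w) B(w)` of the generating function of these products by a power series in
`w`. Its `k`-th coefficient involves the resolvents `(1 - u q^j B(0))⁻¹`, `j ≤ k`, which are
comparable to products of `(1 - u q^j μ)⁻¹` over the eigenvalues `μ`. For `|u| < 1/ρ` the functions
`log |1 - u μ z|` have mean zero on the unit circle, so by irrationality of `β` these products grow
at an exponential rate bounded independently of `u`. Hence `H(u, w)` is holomorphic in `|u| < 1/ρ`
for all `w` in a fixed disc, and Cauchy's estimate gives growth rate at most `ρ`.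

For `ε < 0`, complex conjugation of the cocycle exchanges `λ₁` and `λ₃`.
-/

/-! ### Products along an irrational rotation -/

theorem logTaylor_neg (M : ℕ) (y : ℂ) :
    logTaylor M (-y) = -∑ j ∈ Finset.range M, y ^ j / j := by
  rw [logTaylor, ← Finset.sum_neg_distrib]
  refine Finset.sum_congr rfl fun j _ => ?_
  have hsign : (-1 : ℂ) ^ (j + 1) * (-1) ^ j = -1 := by
    rw [← pow_add, Odd.neg_one_pow (by grind)]
  rw [neg_pow y, ← mul_assoc, hsign, neg_one_mul, neg_div]

theorem norm_inv_one_sub_le_exp {y : ℂ} {x δ : ℝ} {M : ℕ} (hyx : ‖y‖ ≤ x) (hx : x < 1)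
    (hM : x ^ (M + 1) ≤ δ * (1 - x)) :
    ‖1 - y‖⁻¹ ≤ Real.exp ((∑ j ∈ Finset.range (M + 1), y ^ j / j).re + δ) := by
  have hy : ‖y‖ < 1 := hyx.trans_lt hx
  have hx0 : 0 ≤ x := (norm_nonneg y).trans hyx
  have hne : 1 - y ≠ 0 := (isUnit_one_sub_of_norm_lt_one hy).ne_zero
  have htail : ‖y‖ ^ (M + 1) * (1 - ‖y‖)⁻¹ / (M + 1) ≤ δ :=
    calc ‖y‖ ^ (M + 1) * (1 - ‖y‖)⁻¹ / (M + 1)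
        ≤ ‖y‖ ^ (M + 1) * (1 - ‖y‖)⁻¹ := by
          have := sub_pos.2 hy
          exact div_le_self (by positivity) (by linarith [(Nat.cast_nonneg M : (0 : ℝ) ≤ M)])
      _ ≤ x ^ (M + 1) * (1 - x)⁻¹ := by
          have := sub_pos.2 hx
          gcongr
      _ ≤ δ := by rwa [← div_eq_mul_inv, div_le_iff₀ (sub_pos.2 hx)]
  have hlog := norm_log_one_sub_inv_add_logTaylor_neg_le M hy
  rw [logTaylor_neg] at hlog
  have hre := (re_le_norm _).trans (hlog.trans htail)
  rw [add_re, neg_re] at hre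
  rw [← norm_inv, ← exp_log (inv_ne_zero hne), norm_exp, Real.exp_le_exp]
  linarith

theorem norm_geom_sum_le {𝕜 : Type*} [NormedField 𝕜] {q : 𝕜} (hq : ‖q‖ = 1) (hq1 : q ≠ 1)
    (N : ℕ) : ‖∑ k ∈ Finset.range N, q ^ k‖ ≤ 2 / ‖q - 1‖ := by
  rw [geom_sum_eq hq1, norm_div]
  gcongr
  calc ‖q ^ N - 1‖ ≤ ‖q ^ N‖ + ‖(1 : 𝕜)‖ := norm_sub_le _ _
    _ = 2 := by rw [norm_pow, hq, one_pow, norm_one, one_add_one_eq_two]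

theorem norm_sum_rotate_pow_div_le {q : ℂ} (hq : ‖q‖ = 1) (hqinf : ¬IsOfFinOrder q) {z : ℂ}
    (hz : ‖z‖ ≤ 1) (j N : ℕ) :
    ‖∑ k ∈ Finset.range N, (z * q ^ k) ^ j / j‖ ≤ 2 / ‖q ^ j - 1‖ := by
  rcases j.eq_zero_or_pos with rfl | hj
  · simp
  have hsum : ∑ k ∈ Finset.range N, (z * q ^ k) ^ j / j =
      z ^ j / j * ∑ k ∈ Finset.range N, (q ^ j) ^ k := by
    rw [Finset.mul_sum]
    refine Finset.sum_congr rfl fun k _ => ?_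
    rw [mul_pow, pow_right_comm, mul_div_right_comm]
  have hcoeff : ‖z ^ j / (j : ℂ)‖ ≤ 1 := by
    have hj1 : (1 : ℝ) ≤ j := by exact_mod_cast hj
    rw [norm_div, norm_pow, norm_natCast, div_le_one (by positivity)]
    exact (pow_le_one₀ (norm_nonneg z) hz).trans hj1
  have hqj : q ^ j ≠ 1 := fun h => hqinf (isOfFinOrder_iff_pow_eq_one.2 ⟨j, hj, h⟩)
  rw [hsum, norm_mul]
  exact (mul_le_of_le_one_left (norm_nonneg _) hcoeff).trans
    (norm_geom_sum_le (by simp [hq]) hqj N)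

theorem exists_prod_inv_norm_one_sub_le {q : ℂ} (hq : ‖q‖ = 1) (hqinf : ¬IsOfFinOrder q)
    {x δ : ℝ} (hx : x < 1) (hδ : 0 < δ) :
    ∃ C > 0, ∀ z : ℂ, ‖z‖ ≤ x → ∀ N : ℕ,
      ∏ k ∈ Finset.range N, ‖1 - z * q ^ k‖⁻¹ ≤ C * Real.exp (δ * N) := by
  rcases lt_or_ge x 0 with hx0 | hx0
  · exact ⟨1, one_pos, fun z hz => absurd (hz.trans_lt hx0) (norm_nonneg z).not_gt⟩
  obtain ⟨M, hM⟩ := exists_pow_lt_of_lt_one (mul_pos hδ (sub_pos.2 hx)) hx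
  have hM' : x ^ (M + 1) ≤ δ * (1 - x) := (pow_le_pow_of_le_one hx0 hx.le M.le_succ).trans hM.le
  refine ⟨Real.exp (∑ j ∈ Finset.range (M + 1), 2 / ‖q ^ j - 1‖), Real.exp_pos _,
    fun z hz N => ?_⟩
  calc ∏ k ∈ Finset.range N, ‖1 - z * q ^ k‖⁻¹
      ≤ ∏ k ∈ Finset.range N,
          Real.exp ((∑ j ∈ Finset.range (M + 1), (z * q ^ k) ^ j / j).re + δ) :=
        Finset.prod_le_prod (fun _ _ => by positivity) fun k _ =>
          norm_inv_one_sub_le_exp (by simpa [hq] using hz) hx hM'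
    _ = Real.exp ((∑ j ∈ Finset.range (M + 1),
          ∑ k ∈ Finset.range N, (z * q ^ k) ^ j / j).re) * Real.exp (δ * N) := by
        rw [← Real.exp_sum, Finset.sum_add_distrib, Real.exp_add, ← re_sum, Finset.sum_comm,
          Finset.sum_const, Finset.card_range, nsmul_eq_mul, mul_comm δ]
    _ ≤ _ := by
        gcongr
        exact (re_le_norm _).trans <| (norm_sum_le _ _).trans <| Finset.sum_le_sum fun j _ =>
          norm_sum_rotate_pow_div_le hq hqinf (hz.trans hx.le) j N

theorem monotone_prod_range {f : ℕ → ℝ} (hf : ∀ i, 1 ≤ f i) :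
    Monotone fun n => ∏ i ∈ Finset.range n, f i :=
  monotone_nat_of_le_succ fun n => by
    rw [Finset.prod_range_succ]
    exact le_mul_of_one_le_right (Finset.prod_nonneg fun i _ => zero_le_one.trans (hf i)) (hf n)

theorem one_le_two_mul_inv_norm_one_sub {y : ℂ} (hy : ‖y‖ < 1) : 1 ≤ 2 * ‖1 - y‖⁻¹ := by
  have hne : 1 - y ≠ 0 := (isUnit_one_sub_of_norm_lt_one hy).ne_zero
  rw [← div_eq_mul_inv, one_le_div (norm_pos_iff.2 hne)]
  linarith [norm_sub_le 1 y, norm_one (α := ℂ)]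

section Resolvent

open Polynomial

variable {𝔸 : Type*} [NormedRing 𝔸] [NormedAlgebra ℂ 𝔸]

/-- The resolvent `(1 - v b)⁻¹` of an element `b` annihilated by `∏ i < d, (X - μ i)`, expanded in
the Newton basis `∏ i < k, (X - μ i)` of polynomials in `b`. -/
def newtonResolvent (μ : ℕ → ℂ) (d : ℕ) (b : 𝔸) (v : ℂ) : 𝔸 :=
  ∑ k ∈ Finset.range d, (v ^ k * ∏ i ∈ Finset.range (k + 1), (1 - v * μ i)⁻¹) •
    aeval b (∏ i ∈ Finset.range k, (X - C (μ i)))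

variable {μ : ℕ → ℂ} {d : ℕ} {b : 𝔸} {v : ℂ}

theorem newtonResolvent_mul_one_sub
    (hb : aeval b (∏ i ∈ Finset.range d, (X - C (μ i))) = 0) (hv : ∀ i, 1 - v * μ i ≠ 0) :
    newtonResolvent μ d b v * (1 - v • b) = 1 := by
  set N : ℕ → 𝔸 := fun k => aeval b (∏ i ∈ Finset.range k, (X - C (μ i))) with hN
  set c : ℕ → ℂ := fun k => v ^ k * ∏ i ∈ Finset.range k, (1 - v * μ i)⁻¹ with hc
  have hNsucc (k : ℕ) : N k * (1 - v • b) = (1 - v * μ k) • N k - v • N (k + 1) := by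
    simp only [hN, Finset.prod_range_succ, map_mul, map_sub, aeval_X, aeval_C, mul_sub, mul_one,
      mul_smul_comm, Algebra.algebraMap_eq_smul_one]
    module
  have hterm (k : ℕ) :
      ((v ^ k * ∏ i ∈ Finset.range (k + 1), (1 - v * μ i)⁻¹) • N k) * (1 - v • b) =
        c k • N k - c (k + 1) • N (k + 1) := by
    have hk := hv k
    rw [smul_mul_assoc, hNsucc, smul_sub, smul_smul, smul_smul]
    simp only [hc, Finset.prod_range_succ, pow_succ]
    congr 2 <;> field_simp
  rw [newtonResolvent, Finset.sum_mul, Finset.sum_congr rfl fun k _ => hterm k,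
    Finset.sum_range_sub' fun k => c k • N k]
  simp [hN, hc, hb]

theorem differentiableAt_newtonResolvent (b : 𝔸) (hv : ∀ i, 1 - v * μ i ≠ 0) :
    DifferentiableAt ℂ (newtonResolvent μ d b) v := by
  unfold newtonResolvent
  refine DifferentiableAt.fun_sum fun k _ => DifferentiableAt.smul_const ?_ _
  refine (differentiableAt_id.pow k).mul (DifferentiableAt.fun_finsetProd fun i _ => ?_)
  exact DifferentiableAt.inv (by fun_prop) (hv i)

theorem exists_max_norm_newtonResolvent_le {ρ : ℝ} (hρ : 0 < ρ) (hμ : ∀ i, ‖μ i‖ ≤ ρ) (d : ℕ)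
    (b : 𝔸) :
    ∃ D > 0, ∀ v : ℂ, ‖v‖ * ρ < 1 →
      max 1 ‖newtonResolvent μ d b v‖ ≤ D * ∏ i ∈ Finset.range d, ‖1 - v * μ i‖⁻¹ := by
  set N : ℕ → 𝔸 := fun k => aeval b (∏ i ∈ Finset.range k, (X - C (μ i)))
  set S := ∑ k ∈ Finset.range d, ρ⁻¹ ^ k * ‖N k‖
  have : 0 ≤ S := by positivity
  refine ⟨(1 + S) * 2 ^ d, by positivity, fun v hv => ?_⟩
  set P : ℕ → ℝ := fun n => ∏ i ∈ Finset.range n, (2 * ‖1 - v * μ i‖⁻¹) with hP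
  have hone (i : ℕ) : 1 ≤ 2 * ‖1 - v * μ i‖⁻¹ :=
    one_le_two_mul_inv_norm_one_sub <| by
      rw [norm_mul]
      exact (mul_le_mul_of_nonneg_left (hμ i) (norm_nonneg v)).trans_lt hv
  have hP_one : 1 ≤ P d := by simpa [hP] using monotone_prod_range hone d.zero_le
  have hvρ : ‖v‖ ≤ ρ⁻¹ := by
    rw [← one_div, le_div_iff₀ hρ]
    exact hv.le
  have hterm (k : ℕ) (hk : k ∈ Finset.range d) :
      ‖(v ^ k * ∏ i ∈ Finset.range (k + 1), (1 - v * μ i)⁻¹) • N k‖ ≤ P d * (ρ⁻¹ ^ k * ‖N k‖) := by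
    have hprod : ∏ i ∈ Finset.range (k + 1), ‖1 - v * μ i‖⁻¹ ≤ P d :=
      (Finset.prod_le_prod (fun _ _ => by positivity) fun i _ =>
        le_mul_of_one_le_left (by positivity) one_le_two).trans
        (monotone_prod_range hone (Finset.mem_range.1 hk))
    simp only [norm_smul, norm_mul, norm_pow, norm_prod, norm_inv]
    rw [mul_comm (‖v‖ ^ k), mul_assoc]
    gcongr
  have hnorm : ‖newtonResolvent μ d b v‖ ≤ P d * S :=
    (norm_sum_le _ _).trans ((Finset.sum_le_sum hterm).trans_eq (Finset.mul_sum _ _ _).symm)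
  calc max 1 ‖newtonResolvent μ d b v‖ ≤ P d * (1 + S) := by
        rw [mul_add, mul_one]
        exact max_le (le_add_of_le_of_nonneg hP_one (by positivity))
          (le_add_of_nonneg_of_le (by positivity) hnorm)
    _ = (1 + S) * 2 ^ d * ∏ i ∈ Finset.range d, ‖1 - v * μ i‖⁻¹ := by
        simp only [hP, Finset.prod_mul_distrib, Finset.prod_const, Finset.card_range]
        ring

end Resolvent

/-! ### Growth of analytic skew products -/

theorem exists_mul_sum_pow_mul_le_pow {a : ℕ → ℝ} (ha : ∀ j, 0 ≤ a j) {t : ℝ} (ht : 0 < t)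
    (hsum : Summable fun j => a j * t ^ j) {τ : ℝ} (hτ : 0 ≤ τ) :
    ∃ M > 0, ∀ k, k ≠ 0 → τ * ∑ j ∈ Finset.range k, M ^ j * a (k - j) ≤ M ^ k := by
  set f : ℕ → ℝ := fun j => a j * t ^ j
  have hf (j : ℕ) : 0 ≤ f j := mul_nonneg (ha j) (by positivity)
  set m := max 1 (τ * ∑' j, f j)
  have hm1 : 1 ≤ m := le_max_left _ _
  have hmτ : τ * ∑' j, f j ≤ m := le_max_right _ _
  refine ⟨m / t, by positivity, fun k hk => ?_⟩
  obtain ⟨k, rfl⟩ := Nat.exists_eq_succ_of_ne_zero hk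
  have hterm (j : ℕ) (hj : j ∈ Finset.range (k + 1)) :
      (m / t) ^ j * a (k + 1 - j) ≤ m ^ k / t ^ (k + 1) * f (k + 1 - j) := by
    have hjk : j ≤ k := Finset.mem_range_succ_iff.1 hj
    calc (m / t) ^ j * a (k + 1 - j) = m ^ j / t ^ (k + 1) * f (k + 1 - j) := by
          rw [div_pow, ← pow_mul_pow_sub t (hjk.trans k.le_succ)]
          simp only [f]
          field_simp
      _ ≤ _ := by
          have := hf (k + 1 - j)
          gcongr
  have hpartial : ∑ j ∈ Finset.range (k + 1), f (k + 1 - j) ≤ ∑' j, f j :=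
    calc ∑ j ∈ Finset.range (k + 1), f (k + 1 - j)
        ≤ ∑ j ∈ Finset.range (k + 1 + 1), f (k + 1 - j) := by
          rw [Finset.sum_range_succ _ (k + 1)]
          exact le_add_of_nonneg_right (hf _)
      _ = ∑ j ∈ Finset.range (k + 1 + 1), f j := Finset.sum_flip f
      _ ≤ ∑' j, f j := hsum.sum_le_tsum _ fun j _ => hf j
  calc τ * ∑ j ∈ Finset.range (k + 1), (m / t) ^ j * a (k + 1 - j)
      ≤ τ * (m ^ k / t ^ (k + 1) * ∑' j, f j) := by
        gcongr
        refine (Finset.sum_le_sum hterm).trans ?_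
        rw [← Finset.mul_sum]
        gcongr
    _ = m ^ k / t ^ (k + 1) * (τ * ∑' j, f j) := mul_left_comm _ _ _
    _ ≤ m ^ k / t ^ (k + 1) * m := by gcongr
    _ = (m / t) ^ (k + 1) := by rw [div_pow, pow_succ m, mul_div_right_comm]

theorem iteratedDeriv_succ_const_add_smul_zero {𝕜 F : Type*} [NontriviallyNormedField 𝕜]
    [NormedAddCommGroup F] [NormedSpace 𝕜 F] {g : 𝕜 → F} {n : ℕ}
    (hg : ContDiffAt 𝕜 (n + 1 : ℕ) g 0) (c : F) :
    iteratedDeriv (n + 1) (fun u => c + u • g u) 0 = (n + 1) • iteratedDeriv n g 0 := by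
  have hleibniz := iteratedDerivWithin_smul (Set.mem_univ (0 : 𝕜)) uniqueDiffOn_univ
    contDiffAt_id.contDiffWithinAt hg.contDiffWithinAt
  simp only [iteratedDerivWithin_univ] at hleibniz
  rw [Finset.sum_eq_single_of_mem 1 (by simp)
    fun i _ hi => by rcases eq_or_ne i 0 with rfl | h0 <;> simp [iteratedDeriv_id, *]] at hleibniz
  rw [iteratedDeriv_const_add n.succ_pos]
  simpa [iteratedDeriv_id] using! hleibniz

theorem exists_power_series_of_analyticAt {F : Type*} [NormedAddCommGroup F] [NormedSpace ℂ F]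
    {f : ℂ → F} (hf : AnalyticAt ℂ f 0) :
    ∃ a : ℕ → F, a 0 = f 0 ∧ ∃ t > 0, Summable (fun j => ‖a j‖ * t ^ j) ∧
      ∀ w, ‖w‖ ≤ t → HasSum (fun j => w ^ j • a j) (f w) := by
  obtain ⟨p, r, hp⟩ := hf
  obtain ⟨t, ht, htr⟩ := ENNReal.lt_iff_exists_nnreal_btwn.1 hp.r_pos
  refine ⟨p.coeff, hp.coeff_zero _, t, mod_cast ht, ?_, fun w hw => ?_⟩
  · simpa only [FormalMultilinearSeries.norm_apply_eq_norm_coef] using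
      p.summable_norm_mul_pow (htr.trans_le hp.r_le)
  · have hw : w ∈ Metric.eball (0 : ℂ) r := by
      rw [mem_eball_zero_iff]
      exact lt_of_le_of_lt (by exact_mod_cast hw) htr
    simpa only [FormalMultilinearSeries.apply_eq_pow_smul_coeff, zero_add] using hp.hasSum hw

section SkewProduct

open Polynomial

variable {𝔸 : Type*} [NormedRing 𝔸]

/-- The iterates `B(q^(n-1) w) ⋯ B(q w) B(w)` of the skew product with fibre maps `B` over the
rotation `w ↦ q w`. -/
def skewIter (q : ℂ) (B : ℂ → 𝔸) : ℕ → ℂ → 𝔸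
  | 0, _ => 1
  | n + 1, w => skewIter q B n (q * w) * B w

variable [NormedAlgebra ℂ 𝔸]

/-- The coefficient of `w ^ k` in the generating function `∑ uⁿ Bₙ(w)` of the iterates `Bₙ` of
the skew product with fibre maps `B(w) = ∑ w ^ j b_j` over the rotation by `q`; the function `R`
stands for the resolvent `v ↦ (1 - v b₀)⁻¹`. -/
def generatingCoeff (q : ℂ) (b : ℕ → 𝔸) (R : ℂ → 𝔸) (u : ℂ) (k : ℕ) : 𝔸 :=
  ((Pi.single 0 1 : ℕ → 𝔸) k +
    u • ∑ j : Fin k, q ^ (j : ℕ) • (generatingCoeff q b R u j * b (k - j))) * R (u * q ^ k)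
termination_by k

variable {q u w : ℂ} {b : ℕ → 𝔸} {R : ℂ → 𝔸}

theorem generatingCoeff_eq (q : ℂ) (b : ℕ → 𝔸) (R : ℂ → 𝔸) (u : ℂ) (k : ℕ) :
    generatingCoeff q b R u k = ((Pi.single 0 1 : ℕ → 𝔸) k +
      u • ∑ j ∈ Finset.range k, q ^ j • (generatingCoeff q b R u j * b (k - j))) *
        R (u * q ^ k) := by
  rw [generatingCoeff,
    Fin.sum_univ_eq_sum_range fun j => q ^ j • (generatingCoeff q b R u j * b (k - j))]

theorem generatingCoeff_recurrence {k : ℕ}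
    (hR : R (u * q ^ k) * (1 - (u * q ^ k) • b 0) = 1) :
    generatingCoeff q b R u k = (Pi.single 0 1 : ℕ → 𝔸) k +
      u • ∑ j ∈ Finset.range (k + 1), q ^ j • (generatingCoeff q b R u j * b (k - j)) := by
  have h : generatingCoeff q b R u k * (1 - (u * q ^ k) • b 0) = (Pi.single 0 1 : ℕ → 𝔸) k +
      u • ∑ j ∈ Finset.range k, q ^ j • (generatingCoeff q b R u j * b (k - j)) := by
    rw [generatingCoeff_eq, mul_assoc, hR, mul_one]
  rw [mul_sub, mul_one, sub_eq_iff_eq_add] at h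
  rw [Finset.sum_range_succ, Nat.sub_self, smul_add, ← add_assoc, smul_smul, ← mul_smul_comm]
  exact h

theorem norm_generatingCoeff_le (hq : ‖q‖ = 1) {ψ : ℕ → ℝ} (hψ : ∀ k, 1 ≤ ψ k)
    (hR : ∀ k, ‖R (u * q ^ k)‖ ≤ ψ k) {M : ℝ} (hM : 0 ≤ M)
    (hb : ∀ k, k ≠ 0 → ‖u‖ * ∑ j ∈ Finset.range k, M ^ j * ‖b (k - j)‖ ≤ M ^ k) (k : ℕ) :
    ‖generatingCoeff q b R u k‖ ≤ M ^ k * ∏ j ∈ Finset.range (k + 1), ψ j := by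
  have hψ0 (k : ℕ) : 0 ≤ ψ k := zero_le_one.trans (hψ k)
  have hP0 : 0 ≤ ∏ i ∈ Finset.range k, ψ i := Finset.prod_nonneg fun i _ => hψ0 i
  induction k using Nat.strong_induction_on with
  | _ k ih =>
  rw [generatingCoeff_eq]
  rcases eq_or_ne k 0 with rfl | hk
  · simpa using hR 0
  have hterm (j : ℕ) (hj : j ∈ Finset.range k) :
      ‖q ^ j • (generatingCoeff q b R u j * b (k - j))‖ ≤
        (∏ i ∈ Finset.range k, ψ i) * (M ^ j * ‖b (k - j)‖) := by
    have hj := Finset.mem_range.1 hj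
    rw [norm_smul, norm_pow, hq, one_pow, one_mul, ← mul_assoc, mul_comm (∏ i ∈ _, ψ i)]
    refine (norm_mul_le _ _).trans (mul_le_mul_of_nonneg_right ?_ (norm_nonneg _))
    refine (ih j hj (Finset.prod_nonneg fun i _ => hψ0 i)).trans ?_
    exact mul_le_mul_of_nonneg_left (monotone_prod_range hψ hj) (by positivity)
  rw [Pi.single_eq_of_ne hk, zero_add]
  calc ‖(u • ∑ j ∈ Finset.range k, q ^ j • (generatingCoeff q b R u j * b (k - j))) *
          R (u * q ^ k)‖
      ≤ ‖u‖ * ((∏ i ∈ Finset.range k, ψ i) * ∑ j ∈ Finset.range k, M ^ j * ‖b (k - j)‖) *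
          ψ k := by
        refine (norm_mul_le _ _).trans ?_
        rw [norm_smul, Finset.mul_sum]
        gcongr
        · exact norm_sum_le_of_le _ hterm
        · exact hR k
    _ = (‖u‖ * ∑ j ∈ Finset.range k, M ^ j * ‖b (k - j)‖) *
          ∏ i ∈ Finset.range (k + 1), ψ i := by
        rw [Finset.prod_range_succ]
        ring
    _ ≤ M ^ k * ∏ i ∈ Finset.range (k + 1), ψ i :=
        mul_le_mul_of_nonneg_right (hb k hk) (Finset.prod_nonneg fun i _ => hψ0 i)

theorem tsum_eq_one_add_of_recurrence [CompleteSpace 𝔸] {G : ℕ → 𝔸}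
    (hG : ∀ k, G k = (Pi.single 0 1 : ℕ → 𝔸) k +
      u • ∑ j ∈ Finset.range (k + 1), q ^ j • (G j * b (k - j)))
    (hqw : Summable fun k => ‖(q * w) ^ k • G k‖) (hb : Summable fun k => ‖w ^ k • b k‖) :
    ∑' k, w ^ k • G k = 1 + u • ((∑' k, (q * w) ^ k • G k) * ∑' k, w ^ k • b k) := by
  have hterm (k : ℕ) : w ^ k • G k = (Pi.single 0 1 : ℕ → 𝔸) k +
      u • ∑ j ∈ Finset.range (k + 1), ((q * w) ^ j • G j) * (w ^ (k - j) • b (k - j)) := by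
    have hcoeff (j : ℕ) (hj : j ∈ Finset.range (k + 1)) :
        ((q * w) ^ j • G j) * (w ^ (k - j) • b (k - j)) =
          w ^ k • q ^ j • (G j * b (k - j)) := by
      rw [smul_mul_smul_comm, smul_smul, mul_pow, mul_assoc,
        pow_mul_pow_sub w (Finset.mem_range_succ_iff.1 hj), mul_comm]
    have hsingle : w ^ k • (Pi.single 0 1 : ℕ → 𝔸) k = (Pi.single 0 1 : ℕ → 𝔸) k := by
      rcases eq_or_ne k 0 with rfl | hk
      · simp
      · simp [hk]
    rw [Finset.sum_congr rfl hcoeff, ← Finset.smul_sum, smul_comm u, ← hsingle, ← smul_add,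
      ← hG]
  have hprod := (summable_norm_sum_mul_range_of_summable_norm hqw hb).of_norm.hasSum
  rw [← tsum_mul_tsum_eq_tsum_sum_range_of_summable_norm hqw hb] at hprod
  rw [tsum_congr hterm]
  exact ((hasSum_pi_single 0 1).add (hprod.const_smul u)).tsum_eq

theorem differentiableOn_generatingCoeff (hq : ‖q‖ = 1) (b : ℕ → 𝔸) {r : ℝ}
    (hR : DifferentiableOn ℂ R (Metric.ball 0 r)) (k : ℕ) :
    DifferentiableOn ℂ (fun u => generatingCoeff q b R u k) (Metric.ball 0 r) := by
  induction k using Nat.strong_induction_on with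
  | _ k ih =>
  simp only [generatingCoeff_eq q b R _ k]
  refine DifferentiableOn.mul (DifferentiableOn.const_add _ (differentiableOn_id.fun_smul
    (DifferentiableOn.fun_sum fun j hj => ?_))) ?_
  · exact ((ih j (Finset.mem_range.1 hj)).mul_const _).const_smul (q ^ j)
  · exact hR.comp (by fun_prop) fun u hu => by simpa [hq] using hu

theorem iteratedDeriv_generating_eq [CompleteSpace 𝔸] {B : ℂ → 𝔸} {H : ℂ → ℂ → 𝔸} {S : Set ℂ}
    {t : ℝ} (ht : 0 < t) (hS : ∀ w ∈ S, q * w ∈ S)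
    (hdiff : ∀ w ∈ S, DifferentiableOn ℂ (fun u => H u w) (Metric.ball 0 t))
    (heq : ∀ w ∈ S, ∀ u ∈ Metric.ball 0 t, H u w = 1 + u • (H u (q * w) * B w)) (n : ℕ) :
    ∀ w ∈ S, iteratedDeriv n (fun u => H u w) 0 = n.factorial • skewIter q B n w := by
  have hana (w : ℂ) (hw : w ∈ S) : AnalyticAt ℂ (fun u => H u w) 0 :=
    (hdiff w hw).analyticAt (Metric.ball_mem_nhds 0 ht)
  induction n with
  | zero =>
    intro w hw
    simp [skewIter, heq w hw 0 (Metric.mem_ball_self ht)]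
  | succ n ih =>
    intro w hw
    have hqw := hS w hw
    have hev : (fun u => H u w) =ᶠ[nhds 0] fun u => 1 + u • (H u (q * w) * B w) :=
      eventually_of_mem (Metric.ball_mem_nhds 0 ht) (heq w hw)
    have hmul : iteratedDeriv n (fun u => H u (q * w) * B w) 0 =
        iteratedDeriv n (fun u => H u (q * w)) 0 * B w :=
      iteratedDeriv_smul_const (F := 𝔸) (hana _ hqw).contDiffAt (B w)
    rw [hev.iteratedDeriv_eq, iteratedDeriv_succ_const_add_smul_zero
      ((hana _ hqw).fun_mul analyticAt_const).contDiffAt, hmul, ih _ hqw, skewIter, smul_mul_assoc,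
      smul_smul, Nat.factorial_succ]

theorem norm_skewIter_le_of_generating [CompleteSpace 𝔸] {B : ℂ → 𝔸} {H : ℂ → ℂ → 𝔸} {S : Set ℂ}
    {t t' K : ℝ} (ht : 0 < t) (htt' : t < t') (hS : ∀ w ∈ S, q * w ∈ S)
    (hdiff : ∀ w ∈ S, DifferentiableOn ℂ (fun u => H u w) (Metric.ball 0 t'))
    (hbound : ∀ w ∈ S, ∀ u ∈ Metric.ball 0 t', ‖H u w‖ ≤ K)
    (heq : ∀ w ∈ S, ∀ u ∈ Metric.ball 0 t', H u w = 1 + u • (H u (q * w) * B w))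
    (n : ℕ) (hw : w ∈ S) : ‖skewIter q B n w‖ ≤ K * t⁻¹ ^ n := by
  have hcauchy := norm_iteratedDeriv_le_of_forall_mem_sphere_norm_le n ht
    (((hdiff w hw).mono ((closure_ball (0 : ℂ) ht.ne').trans_subset
      (Metric.closedBall_subset_ball htt'))).diffContOnCl)
    fun u hu => hbound w hw u (Metric.sphere_subset_closedBall.trans
      (Metric.closedBall_subset_ball htt') hu)
  have hn : (0 : ℝ) < n.factorial := by exact_mod_cast n.factorial_pos
  rw [iteratedDeriv_generating_eq (ht.trans htt') hS hdiff heq n w hw,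
    ← Nat.cast_smul_eq_nsmul ℂ, norm_smul, norm_natCast, mul_div_assoc] at hcauchy
  rw [inv_pow, ← div_eq_mul_inv]
  exact le_of_mul_le_mul_left hcauchy hn

-- `Q` has to be chosen before `σ`: it fixes the radius in `w`, which must stay the same while the
-- growth rate `σ` decreases to `ρ`.
theorem exists_norm_generatingCoeff_newtonResolvent_le (hq : ‖q‖ = 1) (hqinf : ¬IsOfFinOrder q)
    {μ : ℕ → ℂ} {ρ : ℝ} (hρ : 0 < ρ) (hμ : ∀ i, ‖μ i‖ ≤ ρ) (d : ℕ) {t : ℝ} (ht : 0 < t)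
    (hb : Summable fun j => ‖b j‖ * t ^ j) :
    ∃ Q > 0, ∀ σ > ρ, ∃ K, ∀ u ∈ Metric.ball (0 : ℂ) σ⁻¹, ∀ k,
      ‖generatingCoeff q b (newtonResolvent μ d (b 0)) u k‖ ≤ K * Q ^ k := by
  obtain ⟨D, hD, hresolvent⟩ := exists_max_norm_newtonResolvent_le hρ hμ d (b 0)
  obtain ⟨M, hM, hsum⟩ := exists_mul_sum_pow_mul_le_pow (fun j => norm_nonneg (b j)) ht hb
    (inv_nonneg.2 hρ.le)
  refine ⟨M * (D * Real.exp d), by positivity, fun σ hσ => ?_⟩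
  have hσ0 : 0 < σ := hρ.trans hσ
  obtain ⟨C, _, hprod⟩ := exists_prod_inv_norm_one_sub_le hq hqinf ((div_lt_one hσ0).2 hσ)
    one_pos
  refine ⟨C ^ d * (D * Real.exp d), fun u hu k => ?_⟩
  have hu : ‖u‖ < σ⁻¹ := mem_ball_zero_iff.1 hu
  set ψ : ℕ → ℝ := fun k => D * ∏ i ∈ Finset.range d, ‖1 - u * q ^ k * μ i‖⁻¹
  have hψ (k : ℕ) : max 1 ‖newtonResolvent μ d (b 0) (u * q ^ k)‖ ≤ ψ k := by
    refine hresolvent _ ?_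
    rw [norm_mul, norm_pow, hq, one_pow, mul_one]
    exact (mul_lt_mul_of_pos_right hu hρ).trans ((inv_mul_lt_one₀ hσ0).2 hσ)
  have hψprod (N : ℕ) : ∏ k ∈ Finset.range N, ψ k ≤ C ^ d * (D * Real.exp d) ^ N :=
    calc ∏ k ∈ Finset.range N, ψ k
        = D ^ N * ∏ i ∈ Finset.range d, ∏ k ∈ Finset.range N, ‖1 - u * μ i * q ^ k‖⁻¹ := by
          simp only [ψ, Finset.prod_mul_distrib, Finset.prod_const, Finset.card_range,
            mul_right_comm u]
          rw [Finset.prod_comm]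
      _ ≤ D ^ N * ∏ _i ∈ Finset.range d, C * Real.exp (1 * N) := by
          gcongr
          refine hprod _ ?_ N
          rw [norm_mul, div_eq_inv_mul]
          exact mul_le_mul hu.le (hμ _) (norm_nonneg _) (inv_nonneg.2 hσ0.le)
      _ = C ^ d * (D * Real.exp d) ^ N := by
          rw [Finset.prod_const, Finset.card_range, mul_pow, mul_pow, ← Real.exp_nat_mul,
            ← Real.exp_nat_mul, one_mul, mul_comm (N : ℝ)]
          ring
  calc ‖generatingCoeff q b (newtonResolvent μ d (b 0)) u k‖
      ≤ M ^ k * ∏ j ∈ Finset.range (k + 1), ψ j :=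
        norm_generatingCoeff_le hq (fun k => (le_max_left _ _).trans (hψ k))
          (fun k => (le_max_right _ _).trans (hψ k)) hM.le
          (fun k hk => le_trans (by gcongr; exact hu.le.trans (inv_anti₀ hρ hσ.le)) (hsum k hk)) k
    _ ≤ M ^ k * (C ^ d * (D * Real.exp d) ^ (k + 1)) := by
        gcongr
        exact hψprod _
    _ = C ^ d * (D * Real.exp d) * (M * (D * Real.exp d)) ^ k := by ring

theorem norm_skewIter_le_of_recurrence [CompleteSpace 𝔸] (hq : ‖q‖ = 1) {B : ℂ → 𝔸}
    {G : ℂ → ℕ → 𝔸} {t t' K Q r : ℝ} (ht : 0 < t) (htt' : t < t') (hQ : 0 ≤ Q) (hr : 0 ≤ r)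
    (hQr : Q * r < 1) (hb : ∀ w : ℂ, ‖w‖ ≤ r → Summable fun k => ‖w ^ k • b k‖)
    (hB : ∀ w, ‖w‖ ≤ r → HasSum (fun k => w ^ k • b k) (B w))
    (hdiff : ∀ k, DifferentiableOn ℂ (fun u => G u k) (Metric.ball 0 t'))
    (hbound : ∀ u ∈ Metric.ball 0 t', ∀ k, ‖G u k‖ ≤ K * Q ^ k)
    (hG : ∀ u ∈ Metric.ball 0 t', ∀ k, G u k = (Pi.single 0 1 : ℕ → 𝔸) k +
      u • ∑ j ∈ Finset.range (k + 1), q ^ j • (G u j * b (k - j)))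
    (n : ℕ) (hw : ‖w‖ ≤ r) : ‖skewIter q B n w‖ ≤ K * (1 - Q * r)⁻¹ * t⁻¹ ^ n := by
  have hterm (w : ℂ) (hw : ‖w‖ ≤ r) (u : ℂ) (hu : u ∈ Metric.ball 0 t') (k : ℕ) :
      ‖w ^ k • G u k‖ ≤ K * (Q * r) ^ k := by
    rw [norm_smul, norm_pow]
    calc ‖w‖ ^ k * ‖G u k‖ ≤ r ^ k * (K * Q ^ k) := by
          gcongr
          exact hbound u hu k
      _ = K * (Q * r) ^ k := by ring
  have hgeom : HasSum (fun k : ℕ => K * (Q * r) ^ k) (K * (1 - Q * r)⁻¹) :=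
    (hasSum_geometric_of_lt_one (by positivity) hQr).mul_left _
  refine norm_skewIter_le_of_generating (H := fun u w => ∑' k, w ^ k • G u k)
    (S := {w | ‖w‖ ≤ r}) ht htt' (fun w hw => by simpa [hq] using hw)
    (fun w hw => differentiableOn_tsum_of_summable_norm hgeom.summable
      (fun k => (hdiff k).fun_const_smul _) Metric.isOpen_ball fun k u hu => hterm w hw u hu k)
    (fun w hw u hu => tsum_of_norm_bounded hgeom (hterm w hw u hu)) (fun w hw u hu => ?_) n hw
  rw [← (hB w hw).tsum_eq]
  exact tsum_eq_one_add_of_recurrence (hG u hu) (hgeom.summable.of_nonneg_of_le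
    (fun _ => norm_nonneg _) (hterm _ (by simpa [hq] using hw) u hu)) (hb w hw)

theorem exists_norm_skewIter_le [CompleteSpace 𝔸] (hq : ‖q‖ = 1) (hqinf : ¬IsOfFinOrder q)
    {B : ℂ → 𝔸} (hB : AnalyticAt ℂ B 0) {μ : ℕ → ℂ} {ρ : ℝ} (hρ : 0 < ρ) (hμ : ∀ i, ‖μ i‖ ≤ ρ)
    {d : ℕ} (hroot : aeval (B 0) (∏ i ∈ Finset.range d, (X - C (μ i))) = 0) :
    ∃ r > 0, ∀ s > ρ, ∃ C, ∀ n w, ‖w‖ ≤ r → ‖skewIter q B n w‖ ≤ C * s ^ n := by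
  obtain ⟨b, hb0, t, ht, hb, hBsum⟩ := exists_power_series_of_analyticAt hB
  rw [← hb0] at hroot
  obtain ⟨Q, hQ, hcoeff⟩ :=
    exists_norm_generatingCoeff_newtonResolvent_le hq hqinf hρ hμ d ht hb
  have hQr : Q * min t (2 * Q)⁻¹ < 1 :=
    calc Q * min t (2 * Q)⁻¹ ≤ Q * (2 * Q)⁻¹ := by
          gcongr
          exact min_le_right t _
      _ = 1 / 2 := by field_simp
      _ < 1 := one_half_lt_one
  refine ⟨min t (2 * Q)⁻¹, by positivity, fun s hs => ?_⟩
  obtain ⟨σ, hσ, hσs⟩ := exists_between hs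
  have hσ0 : 0 < σ := hρ.trans hσ
  obtain ⟨K, hK⟩ := hcoeff σ hσ
  have hne {v : ℂ} (hv : v ∈ Metric.ball 0 σ⁻¹) (i : ℕ) : 1 - v * μ i ≠ 0 := by
    refine (isUnit_one_sub_of_norm_lt_one ?_).ne_zero
    exact (norm_mul_le_of_le (mem_ball_zero_iff.1 hv).le (hμ i)).trans_lt
      ((inv_mul_lt_one₀ hσ0).2 hσ)
  refine ⟨K * (1 - Q * min t (2 * Q)⁻¹)⁻¹, fun n w hw => ?_⟩
  rw [← inv_inv s]
  refine norm_skewIter_le_of_recurrence hq (inv_pos.2 (hρ.trans hs)) (inv_strictAnti₀ hσ0 hσs)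
    hQ.le (by positivity) hQr (fun w hw => hb.of_nonneg_of_le (fun _ => norm_nonneg _) fun k => ?_)
    (fun w hw => hBsum w (hw.trans (min_le_left _ _)))
    (differentiableOn_generatingCoeff hq b fun v hv =>
      (differentiableAt_newtonResolvent _ (hne hv)).differentiableWithinAt)
    hK (fun u hu k => generatingCoeff_recurrence <|
      newtonResolvent_mul_one_sub hroot (hne (by simpa [hq] using hu))) n hw
  rw [norm_smul, norm_pow, mul_comm]
  gcongr
  exact hw.trans (min_le_left _ _)

end SkewProduct

/-! ### Jensen's inequality and Lyapunov exponents -/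

theorem logIntegral_mono {f g : ℝ → ℝ} (hf : ∀ x, 0 ≤ f x) (hfg : ∀ x, f x ≤ g x) :
    logIntegral f ≤ logIntegral g := by
  refine EReal.sub_le_sub ?_ ?_
  · refine EReal.coe_ennreal_le_coe_ennreal_iff.2 (lintegral_mono fun x => ?_)
    refine ENNReal.ofReal_le_ofReal_iff'.2 ?_
    rcases (hf x).eq_or_lt with h | h
    · right
      simp [← h]
    · exact Or.inl (Real.log_le_log h (hfg x))
  · refine EReal.coe_ennreal_le_coe_ennreal_iff.2 (lintegral_mono fun x => ?_)
    rcases (hf x).eq_or_lt with h | h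
    · simp [← h]
    · simp only [h.ne', (h.trans_le (hfg x)).ne', if_false]
      exact ENNReal.ofReal_le_ofReal (neg_le_neg (Real.log_le_log h (hfg x)))

theorem logIntegral_eq_integral {g : ℝ → ℝ}
    (hg : ∀ᵐ x ∂volume.restrict (Set.Ioc (0 : ℝ) 1), g x ≠ 0)
    (hint : IntegrableOn (fun x => Real.log (g x)) (Set.Ioc 0 1)) :
    logIntegral g = ((∫ x in Set.Ioc (0 : ℝ) 1, Real.log (g x) : ℝ) : EReal) := by
  have hneg : (∫⁻ x in Set.Ioc (0 : ℝ) 1,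
      if g x = 0 then (⊤ : ℝ≥0∞) else ENNReal.ofReal (-Real.log (g x))) =
      ∫⁻ x in Set.Ioc (0 : ℝ) 1, ENNReal.ofReal (-Real.log (g x)) :=
    lintegral_congr_ae (hg.mono fun x hx => if_neg hx)
  have hneg_ne_top : (∫⁻ x in Set.Ioc (0 : ℝ) 1, ENNReal.ofReal (-Real.log (g x))) ≠ ⊤ :=
    hint.neg.lintegral_lt_top.ne
  rw [logIntegral, hneg, integral_eq_lintegral_pos_part_sub_lintegral_neg_part hint,
    EReal.coe_sub, EReal.coe_ennreal_toReal hint.lintegral_lt_top.ne,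
    EReal.coe_ennreal_toReal hneg_ne_top]

theorem logIntegral_const {K : ℝ} (hK : 0 < K) :
    logIntegral (fun _ => K) = (Real.log K : EReal) := by
  rw [logIntegral_eq_integral (by simp [hK.ne']) (by simp)]
  simp

theorem log_norm_le_circleAverage {f : ℂ → ℂ} {c : ℂ} {r : ℝ} (hr : 0 < r)
    (hf : AnalyticOnNhd ℂ f (Metric.closedBall c r)) (h0 : f c ≠ 0) :
    Real.log ‖f c‖ ≤ Real.circleAverage (fun z => Real.log ‖f z‖) c r := by
  rw [← abs_of_pos hr] at hf
  rw [AnalyticOnNhd.circleAverage_log_norm hr.ne' hf h0]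
  refine le_add_of_nonneg_left (finsum_nonneg fun u => ?_)
  by_cases hu : u ∈ Metric.closedBall c |r|
  · refine mul_nonneg (by exact_mod_cast MeromorphicOn.AnalyticOnNhd.divisor_nonneg hf u) ?_
    rw [abs_of_pos hr, mem_closedBall_iff_norm'] at hu
    rcases (norm_nonneg (c - u)).eq_or_lt with h | h
    · simp [← h]
    · exact Real.log_nonneg (by rwa [← div_eq_mul_inv, one_le_div h])
  · simp [hu]

theorem ae_circleMap_ne_zero {f : ℂ → ℂ} {c : ℂ} {r : ℝ} (hr : 0 < r)
    (hf : AnalyticOnNhd ℂ f (Metric.closedBall c r)) (h0 : f c ≠ 0) :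
    ∀ᵐ θ : ℝ, f (circleMap c r θ) ≠ 0 := by
  have hsphere : f ⁻¹' {0}ᶜ ∈ codiscreteWithin (Metric.sphere c |r|) := by
    rw [abs_of_pos hr]
    exact codiscreteWithin_mono Metric.sphere_subset_closedBall
      (hf.preimage_zero_mem_codiscreteWithin h0 (Metric.mem_closedBall_self hr.le)
        (Metric.isConnected_closedBall hr.le))
  have hcodiscrete : circleMap c r ⁻¹' (f ⁻¹' {0}ᶜ) ∈ codiscrete ℝ :=
    circleMap_preimage_codiscrete hr.ne' hsphere
  simpa only [Measure.restrict_univ] using!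
    ae_restrict_le_codiscreteWithin (μ := volume) MeasurableSet.univ hcodiscrete

theorem log_norm_le_logIntegral {f : ℂ → ℂ} {c : ℂ} {r : ℝ} (hr : 0 < r)
    (hf : AnalyticOnNhd ℂ f (Metric.closedBall c r)) (h0 : f c ≠ 0) :
    (Real.log ‖f c‖ : EReal) ≤ logIntegral fun x => ‖f (circleMap c r (2 * π * x))‖ := by
  have hπ : (2 * π : ℝ) ≠ 0 := by positivity
  have hcircle : CircleIntegrable (fun z => Real.log ‖f z‖) c r :=
    MeromorphicOn.circleIntegrable_log_norm fun z hz => (hf z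
      (Metric.sphere_subset_closedBall (by rwa [abs_of_pos hr] at hz))).meromorphicAt
  have hint : IntegrableOn (fun x : ℝ => Real.log ‖f (circleMap c r (2 * π * x))‖)
      (Set.Ioc 0 1) := by
    have := IntervalIntegrable.comp_mul_left (c := 2 * π) hcircle
    rw [zero_div, div_self hπ] at this
    exact (intervalIntegrable_iff_integrableOn_Ioc_of_le zero_le_one).1 this
  have hae : ∀ᵐ x : ℝ, f (circleMap c r (2 * π * x)) ≠ 0 :=
    (Measure.quasiMeasurePreserving_smul (volume : Measure ℝ) hπ).ae
      (ae_circleMap_ne_zero hr hf h0)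
  rw [logIntegral_eq_integral (ae_restrict_of_ae (by simpa only [norm_ne_zero_iff])) hint]
  refine EReal.coe_le_coe_iff.2 ((log_norm_le_circleAverage hr hf h0).trans_eq ?_)
  rw [← intervalIntegral.integral_of_le zero_le_one,
    intervalIntegral.integral_comp_mul_left (fun θ => Real.log ‖f (circleMap c r θ)‖) hπ]
  simp [Real.circleAverage]

theorem log_norm_le_logIntegral_of_normedSpace {V : Type*} [NormedAddCommGroup V]
    [NormedSpace ℂ V] {F : ℂ → V} {c : ℂ} {r : ℝ} (hr : 0 < r)
    (hF : AnalyticOnNhd ℂ F (Metric.closedBall c r)) (h0 : F c ≠ 0) :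
    (Real.log ‖F c‖ : EReal) ≤ logIntegral fun x => ‖F (circleMap c r (2 * π * x))‖ := by
  obtain ⟨φ, hφ, hφ0⟩ := exists_dual_vector'' ℂ (F c)
  have hnorm : ‖φ (F c)‖ = ‖F c‖ := by simp [hφ0]
  calc (Real.log ‖F c‖ : EReal) = Real.log ‖φ (F c)‖ := by rw [hnorm]
    _ ≤ logIntegral fun x => ‖φ (F (circleMap c r (2 * π * x)))‖ :=
        log_norm_le_logIntegral hr (fun z hz => (φ.analyticAt _).comp (hF z hz))
          (norm_pos_iff.1 (hnorm ▸ norm_pos_iff.2 h0))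
    _ ≤ _ := logIntegral_mono (fun _ => norm_nonneg _) fun x =>
        (φ.le_of_opNorm_le hφ _).trans_eq (one_mul _)

theorem lyapunov_le_log {β : ℝ} {D : ℝ → Matrix (Fin 2) (Fin 2) ℂ} {s C : ℝ} (hs : 0 < s)
    (hD : ∀ n x, ‖cocycleIter D β n x‖ ≤ C * s ^ n) : lyapunov β D ≤ (Real.log s : EReal) := by
  have hlim : Tendsto (fun n : ℕ => ((n : ℝ) + 1)⁻¹ * Real.log (max C 1) + Real.log s) atTop
      (nhds (Real.log s)) := by
    simpa using ((tendsto_one_div_add_atTop_nhds_zero_nat (𝕜 := ℝ)).mul_const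
      (Real.log (max C 1))).add_const (Real.log s)
  refine ge_of_tendsto' ((continuous_coe_real_ereal.tendsto _).comp hlim) fun n =>
    (iInf_le _ n).trans ?_
  have hn : (0 : ℝ) < n + 1 := by positivity
  have hlog : logIntegral (fun x => ‖cocycleIter D β (n + 1) x‖) ≤
      (Real.log (max C 1 * s ^ (n + 1)) : EReal) := by
    rw [← logIntegral_const (by positivity)]
    refine logIntegral_mono (fun _ => norm_nonneg _) fun x => (hD _ x).trans ?_
    gcongr
    exact le_max_left _ _
  refine (mul_le_mul_of_nonneg_left hlog (by exact_mod_cast (inv_pos.2 hn).le)).trans_eq ?_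
  rw [← EReal.coe_mul, Real.log_mul (by positivity) (by positivity), Real.log_pow, mul_add,
    Nat.cast_add_one, inv_mul_cancel_left₀ hn.ne', Function.comp_apply]

theorem log_le_lyapunov {β : ℝ} {D : ℝ → Matrix (Fin 2) (Fin 2) ℂ} {a : ℝ}
    (hD : ∀ n, (Real.log (a ^ n) : EReal) ≤ logIntegral fun x => ‖cocycleIter D β n x‖) :
    (Real.log a : EReal) ≤ lyapunov β D := by
  refine le_iInf fun n => ?_
  have hn : (0 : ℝ) < n + 1 := by positivity
  calc (Real.log a : EReal)
      = (((n : ℝ) + 1)⁻¹ : ℝ) * (Real.log (a ^ (n + 1)) : EReal) := by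
        rw [← EReal.coe_mul, Real.log_pow, Nat.cast_add_one, inv_mul_cancel_left₀ hn.ne']
    _ ≤ _ := mul_le_mul_of_nonneg_left (hD _) (by exact_mod_cast (inv_pos.2 hn).le)

section SkewIter

variable {𝔸 : Type*} [NormedRing 𝔸]

theorem skewIter_zero_right (q : ℂ) (B : ℂ → 𝔸) (n : ℕ) : skewIter q B n 0 = B 0 ^ n := by
  induction n with
  | zero => simp [skewIter]
  | succ n ih => rw [skewIter, mul_zero, ih, pow_succ]

theorem analyticOnNhd_skewIter [NormedAlgebra ℂ 𝔸] {q : ℂ} (hq : ‖q‖ = 1) {B : ℂ → 𝔸} {r : ℝ}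
    (hB : AnalyticOnNhd ℂ B (Metric.closedBall 0 r)) (n : ℕ) :
    AnalyticOnNhd ℂ (skewIter q B n) (Metric.closedBall 0 r) := by
  induction n with
  | zero => exact analyticOnNhd_const
  | succ n ih =>
    exact (ih.comp (analyticOnNhd_const.mul analyticOnNhd_id)
      fun w hw => by simpa [hq] using hw).mul hB

end SkewIter

theorem norm_exp_two_pi_mul_I (β : ℝ) : ‖cexp (2 * π * β * I)‖ = 1 := by
  simpa using Complex.norm_exp_ofReal_mul_I (2 * π * β)

theorem not_isOfFinOrder_exp_two_pi_mul_I {β : ℝ} (hβ : Irrational β) :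
    ¬IsOfFinOrder (cexp (2 * π * β * I)) := by
  rw [isOfFinOrder_iff_pow_eq_one]
  rintro ⟨m, hm, h⟩
  rw [← Complex.exp_nat_mul, Complex.exp_eq_one_iff] at h
  obtain ⟨k, hk⟩ := h
  have hkm : ((m * β : ℝ) : ℂ) = ((k : ℝ) : ℂ) := by
    refine mul_right_cancel₀ two_pi_I_ne_zero ?_
    push_cast
    linear_combination hk
  exact (hβ.natCast_mul hm.ne').ne_int k (by exact_mod_cast hkm)

theorem circleMap_two_pi_mul_add (r x β : ℝ) : circleMap 0 r (2 * π * (x + β)) =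
    cexp (2 * π * β * I) * circleMap 0 r (2 * π * x) := by
  simp only [circleMap, zero_add]
  rw [mul_left_comm, ← Complex.exp_add]
  congr 2
  push_cast
  ring

section MatrixCocycle

open Polynomial

attribute [local instance] Matrix.frobeniusNormedRing Matrix.frobeniusNormedAlgebra
  Matrix.frobeniusNormSMulClass

theorem norm_le_frobenius_norm_of_mem_spectrum {ι : Type*} [Fintype ι] [DecidableEq ι]
    {A : Matrix ι ι ℂ} {μ : ℂ} (hμ : μ ∈ spectrum ℂ A) : ‖μ‖ ≤ ‖A‖ := by
  rw [← Matrix.spectrum_toLin', ← Module.End.hasEigenvalue_iff_mem_spectrum] at hμ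
  obtain ⟨v, hv⟩ := hμ.exists_hasEigenvector
  have hAv : A * Matrix.replicateCol Unit v = μ • Matrix.replicateCol Unit v := by
    rw [← Matrix.replicateCol_mulVec, ← Matrix.replicateCol_smul, ← hv.apply_eq_smul,
      Matrix.toLin'_apply]
  have hv0 : Matrix.replicateCol Unit v ≠ 0 := by simpa using hv.2
  refine le_of_mul_le_mul_right ?_ (norm_pos_iff.2 hv0)
  rw [← norm_smul, ← hAv]
  exact Matrix.frobenius_norm_mul _ _

variable {β a r : ℝ} {B : ℂ → Matrix (Fin 2) (Fin 2) ℂ} {D : ℝ → Matrix (Fin 2) (Fin 2) ℂ}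

theorem norm_cocycleIter_eq
    (hD : ∀ x, ∃ c : ℂ, ‖c‖ = a ∧ D x = c • B (circleMap 0 r (2 * π * x))) (n : ℕ) (x : ℝ) :
    ‖cocycleIter D β n x‖ =
      ‖(a : ℂ) ^ n • skewIter (cexp (2 * π * β * I)) B n (circleMap 0 r (2 * π * x))‖ := by
  have hscalar : ∃ c : ℂ, ‖c‖ = a ^ n ∧ cocycleIter D β n x =
      c • skewIter (cexp (2 * π * β * I)) B n (circleMap 0 r (2 * π * x)) := by
    induction n generalizing x with
    | zero => exact ⟨1, by simp [cocycleIter, skewIter]⟩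
    | succ n ih =>
      obtain ⟨c, hc, hcx⟩ := ih (x + β)
      obtain ⟨c', hc', hDx⟩ := hD x
      refine ⟨c * c', by rw [norm_mul, hc, hc', pow_succ], ?_⟩
      rw [cocycleIter, hcx, hDx, circleMap_two_pi_mul_add, skewIter, smul_mul_smul_comm]
  obtain ⟨c, hc, hcx⟩ := hscalar
  obtain ⟨c', rfl, -⟩ := hD 0
  rw [hcx, norm_smul, norm_smul, hc, norm_pow, norm_real, norm_norm]

theorem log_mul_norm_le_lyapunov (hr : 0 < r) (ha : 0 < a)
    (hB : AnalyticOnNhd ℂ B (Metric.closedBall 0 r)) {μ : ℂ} (hμ : μ ∈ spectrum ℂ (B 0))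
    (hμ0 : 0 < ‖μ‖) (hD : ∀ x, ∃ c : ℂ, ‖c‖ = a ∧ D x = c • B (circleMap 0 r (2 * π * x))) :
    (Real.log (a * ‖μ‖) : EReal) ≤ lyapunov β D := by
  refine log_le_lyapunov fun n => ?_
  set F : ℂ → Matrix (Fin 2) (Fin 2) ℂ :=
    fun w => (a : ℂ) ^ n • skewIter (cexp (2 * π * β * I)) B n w
  have hF : AnalyticOnNhd ℂ F (Metric.closedBall 0 r) := fun w hw =>
    (analyticOnNhd_skewIter (norm_exp_two_pi_mul_I β) hB n w hw).fun_const_smul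
  have hF0 : (a * ‖μ‖) ^ n ≤ ‖F 0‖ := by
    simp only [F]
    rw [skewIter_zero_right, norm_smul, norm_pow, norm_real, Real.norm_of_nonneg ha.le, mul_pow,
      ← norm_pow μ]
    gcongr
    exact norm_le_frobenius_norm_of_mem_spectrum (spectrum.pow_mem_pow _ n hμ)
  have hpos : 0 < (a * ‖μ‖) ^ n := by positivity
  simp only [norm_cocycleIter_eq hD]
  exact (EReal.coe_le_coe_iff.2 (Real.log_le_log hpos hF0)).trans
    (log_norm_le_logIntegral_of_normedSpace hr hF (norm_pos_iff.1 (hpos.trans_le hF0)))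

theorem exists_lyapunov_le_log_mul (hβ : Irrational β) (hB : AnalyticAt ℂ B 0) {μ₁ μ₂ : ℂ}
    (hchar : (B 0).charpoly = (X - C μ₁) * (X - C μ₂)) (hμ₁ : 0 < ‖μ₁‖) (hμ : ‖μ₂‖ ≤ ‖μ₁‖) :
    ∃ r₀ > 0, ∀ r, 0 < r → r ≤ r₀ → ∀ (a : ℝ) (D : ℝ → Matrix (Fin 2) (Fin 2) ℂ), 0 < a →
      (∀ x, ∃ c : ℂ, ‖c‖ = a ∧ D x = c • B (circleMap 0 r (2 * π * x))) →
      lyapunov β D ≤ (Real.log (a * ‖μ₁‖) : EReal) := by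
  have : CompleteSpace (Matrix (Fin 2) (Fin 2) ℂ) := FiniteDimensional.complete ℂ _
  have hroot : aeval (B 0) (∏ i ∈ Finset.range 2, (X - C (if i = 0 then μ₁ else μ₂))) = 0 := by
    simp [Finset.prod_range_succ, ← hchar, Matrix.aeval_self_charpoly]
  obtain ⟨r₀, hr₀, hgrowth⟩ := exists_norm_skewIter_le (norm_exp_two_pi_mul_I β)
    (not_isOfFinOrder_exp_two_pi_mul_I hβ) hB hμ₁ (fun i => by split_ifs <;> simp [hμ]) hroot
  refine ⟨r₀, hr₀, fun r hr hrr₀ a D ha hD => ?_⟩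
  have hle (s : ℝ) (hs : ‖μ₁‖ < s) : lyapunov β D ≤ (Real.log (a * s) : EReal) := by
    obtain ⟨C, hC⟩ := hgrowth s hs
    refine lyapunov_le_log (C := C) (mul_pos ha (hμ₁.trans hs)) fun n x => ?_
    rw [norm_cocycleIter_eq hD, norm_smul, norm_pow, norm_real, Real.norm_of_nonneg ha.le,
      mul_pow, mul_left_comm]
    gcongr
    exact hC n _ (by simpa [abs_of_pos hr] using hrr₀)
  have hlim : Tendsto (fun s => (Real.log (a * s) : EReal)) (nhdsWithin ‖μ₁‖ (Set.Ioi ‖μ₁‖))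
      (nhds (Real.log (a * ‖μ₁‖) : EReal)) :=
    ((continuous_coe_real_ereal.tendsto _).comp
      ((tendsto_const_nhds.mul tendsto_id).log (by positivity))).mono_left nhdsWithin_le_nhds
  exact ge_of_tendsto hlim (eventually_mem_nhdsWithin.mono hle)

theorem exists_lyapunov_eq_log_mul (hβ : Irrational β) (hB : AnalyticAt ℂ B 0) {μ₁ μ₂ : ℂ}
    (hchar : (B 0).charpoly = (X - C μ₁) * (X - C μ₂)) (hμ₁ : 0 < ‖μ₁‖) (hμ : ‖μ₂‖ ≤ ‖μ₁‖) :
    ∃ r₀ > 0, ∀ r, 0 < r → r ≤ r₀ → ∀ (a : ℝ) (D : ℝ → Matrix (Fin 2) (Fin 2) ℂ), 0 < a →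
      (∀ x, ∃ c : ℂ, ‖c‖ = a ∧ D x = c • B (circleMap 0 r (2 * π * x))) →
      lyapunov β D = (Real.log (a * ‖μ₁‖) : EReal) := by
  obtain ⟨r₁, hr₁, hupper⟩ := exists_lyapunov_le_log_mul hβ hB hchar hμ₁ hμ
  obtain ⟨r₂, hr₂, hana⟩ := Metric.nhds_basis_closedBall.eventually_iff.1
    hB.eventually_analyticAt
  have hspec : μ₁ ∈ spectrum ℂ (B 0) := by
    simp [Matrix.mem_spectrum_iff_isRoot_charpoly, hchar]
  refine ⟨min r₁ r₂, lt_min hr₁ hr₂, fun r hr hrr a D ha hD => le_antisymm ?_ ?_⟩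
  · exact hupper r hr (hrr.trans (min_le_left _ _)) a D ha hD
  · exact log_mul_norm_le_lyapunov hr ha
      (fun w hw => hana (Metric.closedBall_subset_closedBall (hrr.trans (min_le_right _ _)) hw))
      hspec hμ₁ hD

end MatrixCocycle

/-! ### The extended Harper cocycle -/

open scoped ComplexConjugate

theorem exists_real_roots_norm {p : ℝ} (hp : 4 * p ≤ 1) :
    ∃ μ₁ μ₂ : ℂ, μ₁ + μ₂ = -1 ∧ μ₁ * μ₂ = p ∧ ‖μ₁‖ = (1 + √(1 - 4 * p)) / 2 ∧ ‖μ₂‖ ≤ ‖μ₁‖ := by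
  set s := √(1 - 4 * p)
  have hs0 : 0 ≤ s := Real.sqrt_nonneg _
  have hs2 : s ^ 2 = 1 - 4 * p := Real.sq_sqrt (by linarith)
  have hnorm : ‖((-(1 + s) / 2 : ℝ) : ℂ)‖ = (1 + s) / 2 := by
    rw [norm_real, Real.norm_eq_abs, neg_div, abs_neg, abs_of_nonneg (by positivity)]
  refine ⟨((-(1 + s) / 2 : ℝ) : ℂ), ((-(1 - s) / 2 : ℝ) : ℂ), ?_, ?_, hnorm, ?_⟩
  · push_cast
    ring
  · norm_cast
    linear_combination -(1 / 4) * hs2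
  · rw [hnorm, norm_real, Real.norm_eq_abs, abs_le]
    constructor <;> linarith

theorem exists_complex_roots_norm {p : ℝ} (hp : 1 < 4 * p) :
    ∃ μ₁ μ₂ : ℂ, μ₁ + μ₂ = -1 ∧ μ₁ * μ₂ = p ∧ ‖μ₁‖ = √p ∧ ‖μ₂‖ = √p := by
  set μ : ℂ := ⟨-1 / 2, √(4 * p - 1) / 2⟩
  have hs2 : √(4 * p - 1) ^ 2 = 4 * p - 1 := Real.sq_sqrt (by linarith)
  have hnormSq : normSq μ = p := by
    rw [normSq_mk]
    linear_combination (1 / 4) * hs2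
  have hnorm : ‖μ‖ = √p := by rw [Complex.norm_def, hnormSq]
  refine ⟨μ, conj μ, ?_, ?_, hnorm, by rw [norm_conj, hnorm]⟩
  · rw [add_conj]
    norm_num [μ]
  · rw [mul_conj, hnormSq]

/-- The logarithm of the larger modulus of the roots of `X² + X + p`. -/
def logMaxRoot (p : ℝ) : ℝ :=
  if 4 * p ≤ 1 then Real.log ((1 + √(1 - 4 * p)) / 2) else Real.log p / 2

theorem exists_roots_log_norm_eq_logMaxRoot (p : ℝ) :
    ∃ μ₁ μ₂ : ℂ, μ₁ + μ₂ = -1 ∧ μ₁ * μ₂ = p ∧ 0 < ‖μ₁‖ ∧ ‖μ₂‖ ≤ ‖μ₁‖ ∧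
      Real.log ‖μ₁‖ = logMaxRoot p := by
  rcases le_or_gt (4 * p) 1 with hp | hp
  · obtain ⟨μ₁, μ₂, hadd, hmul, hnorm, hle⟩ := exists_real_roots_norm hp
    refine ⟨μ₁, μ₂, hadd, hmul, ?_, hle, ?_⟩
    · rw [hnorm]
      positivity
    · rw [hnorm, logMaxRoot, if_pos hp]
  · obtain ⟨μ₁, μ₂, hadd, hmul, hnorm, hnorm'⟩ := exists_complex_roots_norm hp
    have hp0 : 0 < p := by linarith
    refine ⟨μ₁, μ₂, hadd, hmul, ?_, (hnorm'.trans hnorm.symm).le, ?_⟩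
    · rw [hnorm]
      positivity
    · rw [hnorm, logMaxRoot, if_neg hp.not_ge, Real.log_sqrt hp0.le]

section Harper

open Polynomial
attribute [local instance] Matrix.frobeniusNormedRing Matrix.frobeniusNormedAlgebra

variable (lam1 lam2 lam3 β : ℝ) (E : ℂ)

/-- The transfer matrix `A^E(z)` multiplied by `w = exp(2πiz)`, as a polynomial in `w`. -/
def harperPoly (w : ℂ) : Matrix (Fin 2) (Fin 2) ℂ :=
  !![-1, -(lam1 * cexp (π * β * I)); lam3 * (cexp (π * β * I))⁻¹, 0] +
    w • !![E, -lam2; lam2, 0] +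
    w ^ 2 • !![-1, -(lam3 * (cexp (π * β * I))⁻¹); lam1 * cexp (π * β * I), 0]

theorem harperA_eq_smul_harperPoly (z : ℂ) :
    harperA lam1 lam2 lam3 β E z =
      (cexp (2 * π * I * z))⁻¹ • harperPoly lam1 lam2 lam3 β E (cexp (2 * π * I * z)) := by
  have hcos : 2 * Complex.cos (2 * π * z) =
      cexp (2 * π * I * z) + (cexp (2 * π * I * z))⁻¹ := by
    rw [two_cos, ← Complex.exp_neg]
    congr 2 <;> ring
  have hc : harperC lam1 lam2 lam3 β z = lam3 * ((cexp (2 * π * I * z))⁻¹ *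
      (cexp (π * β * I))⁻¹) + lam2 + lam1 * (cexp (2 * π * I * z) * cexp (π * β * I)) := by
    rw [harperC, ← Complex.exp_neg, ← Complex.exp_neg, ← Complex.exp_add, ← Complex.exp_add]
    congr 4 <;> ring
  have hct : harperCt lam1 lam2 lam3 β (z - β) = lam3 * (cexp (2 * π * I * z) *
      (cexp (π * β * I))⁻¹) + lam2 + lam1 * ((cexp (2 * π * I * z))⁻¹ * cexp (π * β * I)) := by
    rw [harperCt, ← Complex.exp_neg, ← Complex.exp_neg, ← Complex.exp_add, ← Complex.exp_add]
    congr 4 <;> ring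
  rw [harperA, hcos, hc, hct]
  have hw0 := Complex.exp_ne_zero (2 * π * I * z)
  ext i j
  fin_cases i <;> fin_cases j <;> simp [harperPoly] <;> field_simp <;> ring

theorem exp_two_pi_mul_I_mul_eq_circleMap (x ε : ℝ) : cexp (2 * π * I * (x + ε * I)) =
    circleMap 0 (Real.exp (-(2 * π * ε))) (2 * π * x) := by
  rw [circleMap, zero_add, ofReal_exp, ← Complex.exp_add]
  congr 1
  push_cast
  linear_combination (2 * π * ε : ℂ) * I_sq

theorem charpoly_harperPoly_zero {μ₁ μ₂ : ℂ} (hadd : μ₁ + μ₂ = -1)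
    (hmul : μ₁ * μ₂ = (lam1 * lam3 : ℝ)) :
    (harperPoly lam1 lam2 lam3 β E 0).charpoly = (X - C μ₁) * (X - C μ₂) := by
  have hzero : harperPoly lam1 lam2 lam3 β E 0 =
      !![-1, -(lam1 * cexp (π * β * I)); lam3 * (cexp (π * β * I))⁻¹, 0] := by
    simp [harperPoly]
  have htrace : (harperPoly lam1 lam2 lam3 β E 0).trace = μ₁ + μ₂ := by
    rw [hzero, Matrix.trace_fin_two_of, hadd, add_zero]
  have hdet : (harperPoly lam1 lam2 lam3 β E 0).det = μ₁ * μ₂ := by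
    rw [hzero, Matrix.det_fin_two_of, hmul, ofReal_mul]
    field_simp
    ring
  rw [Matrix.charpoly_fin_two, htrace, hdet, C_add, C_mul]
  ring

theorem exists_lyapunov_harperA_eq (hβ : Irrational β) :
    ∃ ε₀ : ℝ, ∀ ε : ℝ, ε₀ < ε →
      lyapunov β (fun x : ℝ => harperA lam1 lam2 lam3 β E (x + ε * I)) =
        ((logMaxRoot (lam1 * lam3) + 2 * π * ε : ℝ) : EReal) := by
  obtain ⟨μ₁, μ₂, hadd, hmul, hμ₁, hμ, hlog⟩ :=
    exists_roots_log_norm_eq_logMaxRoot (lam1 * lam3)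
  have hana : AnalyticAt ℂ (harperPoly lam1 lam2 lam3 β E) 0 := by
    unfold harperPoly
    fun_prop
  obtain ⟨r₀, hr₀, h⟩ := exists_lyapunov_eq_log_mul hβ hana
    (charpoly_harperPoly_zero lam1 lam2 lam3 β E hadd hmul) hμ₁ hμ
  refine ⟨-Real.log r₀ / (2 * π), fun ε hε => ?_⟩
  have hr : Real.exp (-(2 * π * ε)) ≤ r₀ := by
    rw [div_lt_iff₀ (by positivity)] at hε
    rw [← Real.le_log_iff_exp_le hr₀]
    linarith
  rw [h _ (Real.exp_pos _) hr (Real.exp (2 * π * ε)) _ (Real.exp_pos _) fun x => ?_,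
    Real.log_mul (Real.exp_ne_zero _) hμ₁.ne', Real.log_exp, hlog, add_comm]
  refine ⟨_, ?_, by rw [harperA_eq_smul_harperPoly, exp_two_pi_mul_I_mul_eq_circleMap]⟩
  rw [norm_inv, norm_circleMap_zero, abs_of_pos (Real.exp_pos _), Real.exp_neg, inv_inv]

theorem harperC_conj (z : ℂ) :
    harperC lam1 lam2 lam3 β (conj z) = conj (harperC lam3 lam2 lam1 β z) := by
  simp only [harperC, map_add, map_mul, map_neg, map_div₀, map_ofNat, conj_ofReal, conj_I,
    ← Complex.exp_conj]
  ring_nf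

theorem harperCt_conj (z : ℂ) :
    harperCt lam1 lam2 lam3 β (conj z) = conj (harperCt lam3 lam2 lam1 β z) := by
  simp only [harperCt, map_add, map_mul, map_neg, map_div₀, map_ofNat, conj_ofReal, conj_I,
    ← Complex.exp_conj]
  ring_nf

theorem harperA_conj (z : ℂ) :
    harperA lam1 lam2 lam3 β E (conj z) = (harperA lam3 lam2 lam1 β (conj E) z).map conj := by
  have hCt : harperCt lam1 lam2 lam3 β (conj z - β) =
      conj (harperCt lam3 lam2 lam1 β (z - β)) := by
    rw [← harperCt_conj, map_sub, conj_ofReal]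
  have hcos : Complex.cos (2 * π * conj z) = conj (Complex.cos (2 * π * z)) := by
    rw [← Complex.cos_conj, map_mul, map_mul, map_ofNat, conj_ofReal]
  have htwo : conj (2 : ℂ) = 2 := map_ofNat _ 2
  ext i j
  fin_cases i <;> fin_cases j <;> simp [harperA, harperC_conj, hCt, hcos, htwo]

end Harper

theorem cocycleIter_map_conj (D : ℝ → Matrix (Fin 2) (Fin 2) ℂ) (β : ℝ) (n : ℕ) (x : ℝ) :
    cocycleIter (fun x => (D x).map conj) β n x =
      (cocycleIter D β n x).map conj := by
  induction n generalizing x with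
  | zero => simp [cocycleIter]
  | succ n ih => rw [cocycleIter, cocycleIter, ih, Matrix.map_mul]

theorem lyapunov_map_conj (β : ℝ) (D : ℝ → Matrix (Fin 2) (Fin 2) ℂ) :
    lyapunov β (fun x => (D x).map conj) = lyapunov β D := by
  simp only [lyapunov, cocycleIter_map_conj, Matrix.frobenius_norm_map_eq _ _ norm_conj]

theorem extendedHarper_lyapunov_asymptotics_general (β lam1 lam2 lam3 : ℝ) (hβ : Irrational β)
    (E : ℂ) :
    ∃ ε₀ > (0 : ℝ), ∀ ε : ℝ, ε₀ < |ε| →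
      lyapunov β (fun x : ℝ => harperA lam1 lam2 lam3 β E ((x : ℂ) + (ε : ℂ) * I)) =
        (((if 4 * lam1 * lam3 ≤ 1 then Real.log ((1 + √(1 - 4 * lam1 * lam3)) / 2)
            else Real.log (lam1 * lam3) / 2) + 2 * π * |ε| : ℝ) : EReal) := by
  obtain ⟨ε₁, hpos⟩ := exists_lyapunov_harperA_eq lam1 lam2 lam3 β E hβ
  obtain ⟨ε₂, hneg⟩ := exists_lyapunov_harperA_eq lam3 lam2 lam1 β (conj E) hβ
  refine ⟨max 1 (max ε₁ ε₂), by positivity, fun ε hε => ?_⟩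
  simp only [max_lt_iff] at hε
  rw [mul_assoc 4, ← logMaxRoot]
  rcases le_total 0 ε with h | h
  · rw [abs_of_nonneg h] at hε ⊢
    exact hpos ε hε.2.1
  · rw [abs_of_nonpos h] at hε ⊢
    have hconj (x : ℝ) : harperA lam1 lam2 lam3 β E (x + ε * I) =
        (harperA lam3 lam2 lam1 β (conj E) (x + (-ε : ℝ) * I)).map conj := by
      rw [← harperA_conj]
      simp
    simp only [hconj]
    rw [lyapunov_map_conj, hneg _ hε.2.2, mul_comm lam3]

/-- For irrational `β` and nonnegative couplings with `(λ₁, λ₃) ≠ (0,0)`,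
letting `L_M = log((1+√(1-4λ₁λ₃))/2)` if `4λ₁λ₃ ≤ 1` and `L_M = (1/2)log(λ₁λ₃)` otherwise,
for every real `E` there is `ε₀ > 0` with
`L(β, A^E_ε) = L_M + 2π|ε|` for all `|ε| > ε₀`. -/
theorem extendedHarper_lyapunov_asymptotics
    (β lam1 lam2 lam3 : ℝ) (hβ : Irrational β)
    (h1 : 0 ≤ lam1) (h2 : 0 ≤ lam2) (h3 : 0 ≤ lam3)
    (hpos : (lam1, lam3) ≠ (0, 0)) :
    ∀ E : ℝ, ∃ ε₀ > (0:ℝ), ∀ ε : ℝ, ε₀ < |ε| →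
      lyapunov β (fun x : ℝ => harperA lam1 lam2 lam3 β (E : ℂ) ((x : ℂ) + (ε : ℂ) * Complex.I)) =
        (((if 4 * lam1 * lam3 ≤ 1 then Real.log ((1 + Real.sqrt (1 - 4 * lam1 * lam3)) / 2)
            else Real.log (lam1 * lam3) / 2) + 2 * π * |ε| : ℝ) : EReal) :=
  fun E => extendedHarper_lyapunov_asymptotics_general β lam1 lam2 lam3 hβ E
end
end

section
/- The Lyapunov exponent is jointly continuous at every constant cocycle, for arbitrary (not necessarily irrational) frequency: let A ∈ M₂(ℂ), β₀ ∈ ℝ, and suppose β_n → β₀ in ℝ and D_n → A uniformly on ℝ, where each D_n : ℝ → M₂(ℂ) is continuous and 1-periodic and A is regarded as the constant function. Then L(β_n, D_n) → log ρ(A) in ℝ ∪ {−∞}, where ρ(A) is the spectral radius of A (with log 0 := −∞). -/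
open MeasureTheory Filter Complex
open scoped ENNReal Real NNReal

noncomputable section

attribute [local instance] Matrix.frobeniusNormedAddCommGroup

open scoped Matrix Topology

/-!
Neither bound on the Lyapunov exponent sees the frequency: for each real `r ≠ ρ(A)` some
neighbourhood `V` of `A` decides, for all `V`-valued cocycles over all rotations at once, on which
side of `log r` the exponent lies.

If `ρ(A) < r`, Gelfand's formula gives an `n` with `‖A ^ n‖ < r ^ n`. This persists for products of
`n` matrices close to `A`, and one such `n` already bounds the infimum.

If `r < ρ(A)`, all products of `n` matrices close to `A` must have norm at least `r ^ n`, with no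
multiplicative constant, since the infimum includes small `n`. The Frobenius norm is unitarily
invariant, so `A` may be taken upper triangular with `r < ‖A 0 0‖`. If also `r < ‖A 1 1‖`, then
`r ^ 2 < ‖det A‖` and one uses `‖det M‖ ≤ ‖M‖ ^ 2`. Otherwise the diagonal entries have different
moduli, and a thin cone around the first axis is mapped into itself, with expansion by `r`, by every
matrix close to `A`.
-/

section LogIntegral

lemma logIntegral_mono_s8 {g h : ℝ → ℝ} (hg : ∀ x, 0 ≤ g x) (hgh : ∀ x, g x ≤ h x) :
    logIntegral g ≤ logIntegral h := by
  refine EReal.sub_le_sub (EReal.coe_ennreal_le_coe_ennreal_iff.2 <| lintegral_mono fun x => ?_)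
    (EReal.coe_ennreal_le_coe_ennreal_iff.2 <| lintegral_mono fun x => ?_)
  · rcases (hg x).eq_or_lt with hx | hx
    · simp [← hx]
    · exact ENNReal.ofReal_le_ofReal (Real.log_le_log hx (hgh x))
  · rcases (hg x).eq_or_lt with hx | hx
    · simp [← hx]
    · rw [if_neg hx.ne', if_neg (hx.trans_le (hgh x)).ne']
      exact ENNReal.ofReal_le_ofReal (neg_le_neg (Real.log_le_log hx (hgh x)))

lemma logIntegral_const_s8 (c : ℝ≥0) : logIntegral (fun _ => c) = ENNReal.log c := by
  rcases eq_or_ne c 0 with rfl | hc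
  · simp [logIntegral]
  · simp only [logIntegral, lintegral_const, Measure.restrict_apply_univ, Real.volume_Ioc,
      sub_zero, ENNReal.ofReal_one, mul_one, NNReal.coe_eq_zero, hc, if_false,
      EReal.coe_ennreal_ofReal, ENNReal.log_of_nnreal hc, ← EReal.coe_sub,
      max_zero_sub_max_neg_zero_eq_self]

end LogIntegral

section GrowthRate

variable {β : ℝ} {D : ℝ → Matrix (Fin 2) (Fin 2) ℂ} {r : ℝ≥0}

lemma inv_mul_logIntegral_const_pow (r : ℝ≥0) (n : ℕ) :
    (((n + 1 : ℝ)⁻¹ : ℝ) : EReal) * logIntegral (fun _ => (r : ℝ) ^ (n + 1)) =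
      ENNReal.log r := by
  have hinv : (((n + 1 : ℝ)⁻¹ : ℝ) : EReal) * ((n + 1 : ℕ) : EReal) = 1 := by
    rw [← EReal.coe_natCast, ← EReal.coe_mul, Nat.cast_succ,
      inv_mul_cancel₀ n.cast_add_one_ne_zero, EReal.coe_one]
  have hpow := logIntegral_const_s8 (r ^ (n + 1))
  rw [NNReal.coe_pow, ENNReal.coe_pow, ENNReal.log_pow] at hpow
  rw [hpow, ← mul_assoc, hinv, one_mul]

lemma log_le_lyapunov_s8 (h : ∀ n x, (r : ℝ) ^ n ≤ ‖cocycleIter D β n x‖) :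
    ENNReal.log r ≤ lyapunov β D :=
  le_iInf fun n => inv_mul_logIntegral_const_pow r n ▸ mul_le_mul_of_nonneg_left
    (logIntegral_mono_s8 (fun _ => by positivity) (h (n + 1))) (EReal.coe_nonneg.2 (by positivity))

lemma lyapunov_le_log_s8 {n : ℕ} (hn : n ≠ 0) (h : ∀ x, ‖cocycleIter D β n x‖ ≤ (r : ℝ) ^ n) :
    lyapunov β D ≤ ENNReal.log r := by
  obtain ⟨n, rfl⟩ := Nat.exists_eq_succ_of_ne_zero hn
  exact (iInf_le _ n).trans <| inv_mul_logIntegral_const_pow r n ▸ mul_le_mul_of_nonneg_left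
    (logIntegral_mono_s8 (fun _ => norm_nonneg _) h) (EReal.coe_nonneg.2 (by positivity))

end GrowthRate

section UpperBound

lemma exists_nnnorm_pow_lt_of_spectralRadius_lt {𝓐 : Type*} [NormedRing 𝓐] [NormedAlgebra ℂ 𝓐]
    [CompleteSpace 𝓐] {a : 𝓐} {r : ℝ≥0} (h : spectralRadius ℂ a < r) :
    ∃ n ≠ 0, ‖a ^ n‖₊ < r ^ n := by
  obtain ⟨n, hn, hn₀⟩ :=
    (((spectrum.pow_nnnorm_pow_one_div_tendsto_nhds_spectralRadius a).eventually_lt_const h).and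
      (eventually_ne_atTop 0)).exists
  refine ⟨n, hn₀, ?_⟩
  rwa [one_div, ENNReal.rpow_inv_lt_iff (by positivity), ENNReal.rpow_natCast,
    ← ENNReal.coe_pow, ENNReal.coe_lt_coe] at hn

lemma exists_nhds_cocycleIter_mem (A : Matrix (Fin 2) (Fin 2) ℂ) (n : ℕ)
    {W : Set (Matrix (Fin 2) (Fin 2) ℂ)} (hW : W ∈ 𝓝 (A ^ n)) :
    ∃ V ∈ 𝓝 A, ∀ β D, (∀ x, D x ∈ V) → ∀ x, cocycleIter D β n x ∈ W := by
  induction n generalizing W with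
  | zero => exact ⟨Set.univ, univ_mem, fun _ _ _ _ => mem_of_mem_nhds hW⟩
  | succ n ih =>
    have hmul : Tendsto (fun p : Matrix (Fin 2) (Fin 2) ℂ × Matrix (Fin 2) (Fin 2) ℂ => p.1 * p.2)
        (𝓝 (A ^ n) ×ˢ 𝓝 A) (𝓝 (A ^ (n + 1))) :=
      pow_succ A n ▸ tendsto_fst.mul tendsto_snd
    obtain ⟨W', hW', V', hV', hsub⟩ := mem_prod_iff.1 (hmul hW)
    obtain ⟨V, hV, hiter⟩ := ih hW'
    exact ⟨V ∩ V', inter_mem hV hV', fun β D hD x =>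
      hsub (Set.mk_mem_prod (hiter β D (fun y => (hD y).1) (x + β)) (hD x).2)⟩

attribute [local instance] Matrix.frobeniusNormedRing Matrix.frobeniusNormedAlgebra in
lemma exists_nhds_lyapunov_le_log {A : Matrix (Fin 2) (Fin 2) ℂ} {r : ℝ≥0}
    (h : spectralRadius ℂ A < r) :
    ∃ V ∈ 𝓝 A, ∀ β D, (∀ x, D x ∈ V) → lyapunov β D ≤ ENNReal.log r := by
  have : CompleteSpace (Matrix (Fin 2) (Fin 2) ℂ) := FiniteDimensional.complete ℂ _
  obtain ⟨n, hn, hlt⟩ := exists_nnnorm_pow_lt_of_spectralRadius_lt h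
  obtain ⟨V, hV, hiter⟩ :=
    exists_nhds_cocycleIter_mem A n (continuous_nnnorm.continuousAt.eventually_lt_const hlt)
  exact ⟨V, hV, fun β D hD => lyapunov_le_log_s8 hn fun x => (hiter β D hD x).le⟩

end UpperBound

section FrobeniusNorm

variable {𝕜 m n : Type*} [RCLike 𝕜] [Fintype m] [Fintype n]

lemma frobenius_norm_sq_eq_sum {E : Type*} [NormedAddCommGroup E] (M : Matrix m n E) :
    ‖M‖ ^ 2 = ∑ i, ∑ j, ‖M i j‖ ^ 2 := by
  rw [Matrix.frobenius_norm_def, ← Real.sqrt_eq_rpow, Real.sq_sqrt (by positivity)]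
  simp only [Real.rpow_ofNat]

lemma frobenius_norm_sq_eq_trace (M : Matrix m n 𝕜) : ((‖M‖ ^ 2 : ℝ) : 𝕜) = (Mᴴ * M).trace := by
  rw [frobenius_norm_sq_eq_sum, Finset.sum_comm]
  simp [Matrix.trace, Matrix.mul_apply, RCLike.conj_mul]

lemma frobenius_norm_unitary_mul [DecidableEq m] {U : Matrix m m 𝕜}
    (hU : U ∈ Matrix.unitaryGroup m 𝕜) (M : Matrix m n 𝕜) : ‖U * M‖ = ‖M‖ := by
  have htrace : (U * M)ᴴ * (U * M) = Mᴴ * M := by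
    rw [Matrix.conjTranspose_mul, Matrix.mul_assoc, ← Matrix.mul_assoc Uᴴ,
      ← Matrix.star_eq_conjTranspose U, Matrix.mem_unitaryGroup_iff'.1 hU, Matrix.one_mul]
  rw [← sq_eq_sq₀ (norm_nonneg _) (norm_nonneg _), ← RCLike.ofReal_inj (K := 𝕜),
    frobenius_norm_sq_eq_trace, frobenius_norm_sq_eq_trace, htrace]

lemma frobenius_norm_mul_unitary [DecidableEq n] {U : Matrix n n 𝕜}
    (hU : U ∈ Matrix.unitaryGroup n 𝕜) (M : Matrix m n 𝕜) : ‖M * U‖ = ‖M‖ := by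
  rw [← Matrix.frobenius_norm_conjTranspose, Matrix.conjTranspose_mul,
    ← Matrix.star_eq_conjTranspose U, frobenius_norm_unitary_mul (Unitary.star_mem hU),
    Matrix.frobenius_norm_conjTranspose]

lemma norm_apply_le_frobenius_norm {E : Type*} [NormedAddCommGroup E] (M : Matrix m n E)
    (i : m) (j : n) : ‖M i j‖ ≤ ‖M‖ :=
  (PiLp.norm_apply_le (WithLp.toLp 2 (M i)) j).trans
    (PiLp.norm_apply_le (WithLp.toLp 2 fun i => WithLp.toLp 2 (M i)) i)

lemma norm_det_fin_two_le_sq {R : Type*} [NormedCommRing R] (M : Matrix (Fin 2) (Fin 2) R) :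
    ‖M.det‖ ≤ ‖M‖ ^ 2 := by
  rw [Matrix.det_fin_two, frobenius_norm_sq_eq_sum, Fin.sum_univ_two, Fin.sum_univ_two,
    Fin.sum_univ_two]
  calc ‖M 0 0 * M 1 1 - M 0 1 * M 1 0‖ ≤ ‖M 0 0‖ * ‖M 1 1‖ + ‖M 0 1‖ * ‖M 1 0‖ :=
        norm_sub_le_of_le (norm_mul_le _ _) (norm_mul_le _ _)
    _ ≤ ‖M 0 0‖ ^ 2 + ‖M 0 1‖ ^ 2 + (‖M 1 0‖ ^ 2 + ‖M 1 1‖ ^ 2) := by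
        nlinarith [two_mul_le_add_sq ‖M 0 0‖ ‖M 1 1‖, two_mul_le_add_sq ‖M 0 1‖ ‖M 1 0‖]

end FrobeniusNorm

section UnitaryConjugation

variable {𝕜 n : Type*} [RCLike 𝕜] [Fintype n] [DecidableEq n]

lemma exists_norm_eq_one_mulVec_eq_smul {A : Matrix n n 𝕜} {μ : 𝕜} (hμ : μ ∈ spectrum 𝕜 A) :
    ∃ u : EuclideanSpace 𝕜 n, ‖u‖ = 1 ∧ A *ᵥ u.ofLp = μ • u.ofLp := by
  obtain ⟨v, hv⟩ := (Module.End.hasEigenvalue_iff_mem_spectrum.2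
    ((Matrix.spectrum_toLin' A).symm ▸ hμ)).exists_hasEigenvector
  have hAv : A *ᵥ v = μ • v := hv.apply_eq_smul
  refine ⟨(‖WithLp.toLp 2 v‖ : 𝕜)⁻¹ • WithLp.toLp 2 v,
    norm_smul_inv_norm (by simpa using hv.2), ?_⟩
  rw [WithLp.ofLp_smul, Matrix.mulVec_smul, hAv, smul_comm]

lemma exists_unitary_col_eq {u : EuclideanSpace 𝕜 n} (hu : ‖u‖ = 1) (i : n) :
    ∃ U ∈ Matrix.unitaryGroup n 𝕜, U.col i = u.ofLp := by
  have hortho : Orthonormal 𝕜 (({i} : Set n).domRestrict fun _ => u) :=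
    orthonormal_subsingleton_iff.2 fun _ => hu
  obtain ⟨b, hb⟩ := hortho.exists_orthonormalBasis_extension_of_card_eq finrank_euclideanSpace
  refine ⟨_, (EuclideanSpace.basisFun n 𝕜).toMatrix_orthonormalBasis_mem_unitary b, ?_⟩
  ext j
  simp [Module.Basis.toMatrix_apply, hb i rfl]

lemma exists_unitary_conj_col_eq_single {A : Matrix n n 𝕜} {μ : 𝕜} (hμ : μ ∈ spectrum 𝕜 A)
    (i : n) : ∃ U ∈ Matrix.unitaryGroup n 𝕜, (star U * A * U).col i = Pi.single i μ := by
  obtain ⟨u, hu, hAu⟩ := exists_norm_eq_one_mulVec_eq_smul hμ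
  obtain ⟨U, hU, hcol⟩ := exists_unitary_col_eq hu i
  rw [← Matrix.mulVec_single_one] at hcol
  refine ⟨U, hU, ?_⟩
  calc (star U * A * U).col i = star U *ᵥ A *ᵥ U *ᵥ Pi.single i 1 := by
        rw [Matrix.mulVec_mulVec, Matrix.mulVec_mulVec, Matrix.mulVec_single_one]
    _ = μ • star U *ᵥ U *ᵥ Pi.single i 1 := by rw [hcol, hAu, Matrix.mulVec_smul]
    _ = Pi.single i μ := by
        rw [Matrix.mulVec_mulVec, Matrix.mem_unitaryGroup_iff'.1 hU, Matrix.one_mulVec,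
          ← Pi.single_smul, smul_eq_mul, mul_one]

variable {U : Matrix (Fin 2) (Fin 2) ℂ}

lemma cocycleIter_unitary_conj (hU : U ∈ Matrix.unitaryGroup (Fin 2) ℂ) (β : ℝ)
    (D : ℝ → Matrix (Fin 2) (Fin 2) ℂ) (n : ℕ) (x : ℝ) :
    cocycleIter (fun y => star U * D y * U) β n x = star U * cocycleIter D β n x * U := by
  induction n generalizing x with
  | zero => simp [cocycleIter, Matrix.mem_unitaryGroup_iff'.1 hU]
  | succ n ih =>
    simp only [cocycleIter, ih]
    calc star U * cocycleIter D β n (x + β) * U * (star U * D x * U)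
        = star U * cocycleIter D β n (x + β) * (U * star U) * D x * U := by noncomm_ring
      _ = star U * (cocycleIter D β n (x + β) * D x) * U := by
        rw [Matrix.mem_unitaryGroup_iff.1 hU, mul_one]; noncomm_ring

lemma lyapunov_unitary_conj (hU : U ∈ Matrix.unitaryGroup (Fin 2) ℂ) (β : ℝ)
    (D : ℝ → Matrix (Fin 2) (Fin 2) ℂ) :
    lyapunov β (fun x => star U * D x * U) = lyapunov β D := by
  simp only [lyapunov, cocycleIter_unitary_conj hU, frobenius_norm_mul_unitary hU,
    frobenius_norm_unitary_mul (Unitary.star_mem hU)]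

end UnitaryConjugation

section InvariantCone

/-- `M` maps the cone `‖v 1‖ ≤ δ ‖v 0‖` around the first coordinate axis into itself and expands
the first coordinate of the vectors of this cone by a factor of at least `r`. -/
def ExpandsCone {𝕜 : Type*} [NormedField 𝕜] (δ r : ℝ) (M : Matrix (Fin 2) (Fin 2) 𝕜) : Prop :=
  ∀ v : Fin 2 → 𝕜, ‖v 1‖ ≤ δ * ‖v 0‖ →
    ‖(M *ᵥ v) 1‖ ≤ δ * ‖(M *ᵥ v) 0‖ ∧ r * ‖v 0‖ ≤ ‖(M *ᵥ v) 0‖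

namespace ExpandsCone

variable {𝕜 : Type*} [NormedField 𝕜] {δ r s : ℝ} {M N : Matrix (Fin 2) (Fin 2) 𝕜}

lemma one : ExpandsCone δ 1 (1 : Matrix (Fin 2) (Fin 2) 𝕜) := fun v hv => by
  simpa using hv

lemma mul (hr : 0 ≤ r) (hM : ExpandsCone δ r M) (hN : ExpandsCone δ s N) :
    ExpandsCone δ (r * s) (M * N) := fun v hv => by
  obtain ⟨hNv, hsv⟩ := hN v hv
  obtain ⟨hMNv, hrv⟩ := hM _ hNv
  rw [← Matrix.mulVec_mulVec]
  refine ⟨hMNv, ?_⟩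
  calc r * s * ‖v 0‖ = r * (s * ‖v 0‖) := mul_assoc ..
    _ ≤ r * ‖(N *ᵥ v) 0‖ := by gcongr
    _ ≤ ‖(M *ᵥ (N *ᵥ v)) 0‖ := hrv

lemma le_norm_apply_zero_zero (hδ : 0 ≤ δ) (hM : ExpandsCone δ r M) : r ≤ ‖M 0 0‖ := by
  simpa using (hM (Pi.single 0 1) (by simpa using hδ)).2

lemma of_entries (hδ : 0 ≤ δ) (h₀ : r ≤ ‖M 0 0‖ - δ * ‖M 0 1‖)
    (h₁ : ‖M 1 0‖ + δ * ‖M 1 1‖ ≤ δ * r) : ExpandsCone δ r M := fun v hv => by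
  have hmulVec (i : Fin 2) : (M *ᵥ v) i = M i 0 * v 0 + M i 1 * v 1 := by
    simp [Matrix.mulVec, dotProduct, Fin.sum_univ_two]
  have expand : r * ‖v 0‖ ≤ ‖(M *ᵥ v) 0‖ :=
    calc r * ‖v 0‖ ≤ (‖M 0 0‖ - δ * ‖M 0 1‖) * ‖v 0‖ := by gcongr
      _ = ‖M 0 0 * v 0‖ - ‖M 0 1‖ * (δ * ‖v 0‖) := by rw [norm_mul]; ring
      _ ≤ ‖M 0 0 * v 0‖ - ‖M 0 1‖ * ‖v 1‖ := by gcongr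
      _ ≤ ‖M 0 0 * v 0 + M 0 1 * v 1‖ := norm_mul (M 0 1) _ ▸ norm_sub_le_norm_add _ _
      _ = ‖(M *ᵥ v) 0‖ := by rw [hmulVec]
  refine ⟨?_, expand⟩
  calc ‖(M *ᵥ v) 1‖ = ‖M 1 0 * v 0 + M 1 1 * v 1‖ := by rw [hmulVec]
    _ ≤ ‖M 1 0‖ * ‖v 0‖ + ‖M 1 1‖ * ‖v 1‖ :=
      norm_add_le_of_le (norm_mul_le _ _) (norm_mul_le _ _)
    _ ≤ ‖M 1 0‖ * ‖v 0‖ + ‖M 1 1‖ * (δ * ‖v 0‖) := by gcongr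
    _ = (‖M 1 0‖ + δ * ‖M 1 1‖) * ‖v 0‖ := by ring
    _ ≤ δ * r * ‖v 0‖ := by gcongr
    _ = δ * (r * ‖v 0‖) := mul_assoc ..
    _ ≤ δ * ‖(M *ᵥ v) 0‖ := by gcongr

lemma exists_eventually_nhds {A : Matrix (Fin 2) (Fin 2) 𝕜} (hA : A 1 0 = 0)
    (h₁ : ‖A 1 1‖ < r) (h₀ : r < ‖A 0 0‖) :
    ∃ δ ≥ 0, ∀ᶠ M in 𝓝 A, ExpandsCone δ r M := by
  have hsmall : ∀ᶠ δ in 𝓝[>] (0 : ℝ), r < ‖A 0 0‖ - δ * ‖A 0 1‖ := by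
    have hcont : Continuous fun δ : ℝ => ‖A 0 0‖ - δ * ‖A 0 1‖ := by fun_prop
    exact nhdsWithin_le_nhds (hcont.continuousAt.eventually_const_lt (by simpa using h₀))
  obtain ⟨δ, hδA, hδ⟩ := (hsmall.and self_mem_nhdsWithin).exists
  have hδr : ‖A 1 0‖ + δ * ‖A 1 1‖ < δ * r := by
    simpa [hA] using mul_lt_mul_of_pos_left h₁ hδ
  have hcont₀ : Continuous fun M : Matrix (Fin 2) (Fin 2) 𝕜 => ‖M 0 0‖ - δ * ‖M 0 1‖ := by
    fun_prop
  have hcont₁ : Continuous fun M : Matrix (Fin 2) (Fin 2) 𝕜 => ‖M 1 0‖ + δ * ‖M 1 1‖ := by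
    fun_prop
  refine ⟨δ, hδ.le, ?_⟩
  filter_upwards [hcont₀.continuousAt.eventually_const_lt hδA,
    hcont₁.continuousAt.eventually_lt_const hδr] with M hM₀ hM₁
  exact of_entries hδ.le hM₀.le hM₁.le

end ExpandsCone

end InvariantCone

section LowerBound

variable {β : ℝ} {D : ℝ → Matrix (Fin 2) (Fin 2) ℂ} {r : ℝ≥0}

lemma log_le_lyapunov_of_expandsCone {δ : ℝ} (hδ : 0 ≤ δ) (hD : ∀ x, ExpandsCone δ r (D x)) :
    ENNReal.log r ≤ lyapunov β D := by
  have hiter (n : ℕ) (x : ℝ) : ExpandsCone δ ((r : ℝ) ^ n) (cocycleIter D β n x) := by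
    induction n generalizing x with
    | zero => simpa [cocycleIter] using ExpandsCone.one
    | succ n ih => exact pow_succ (r : ℝ) n ▸ (ih (x + β)).mul (by positivity) (hD x)
  exact log_le_lyapunov_s8 fun n x =>
    ((hiter n x).le_norm_apply_zero_zero hδ).trans (norm_apply_le_frobenius_norm _ 0 0)

lemma log_le_lyapunov_of_det (hD : ∀ x, (r : ℝ) ^ 2 ≤ ‖(D x).det‖) :
    ENNReal.log r ≤ lyapunov β D := by
  have hdet (n : ℕ) (x : ℝ) : ((r : ℝ) ^ n) ^ 2 ≤ ‖(cocycleIter D β n x).det‖ := by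
    induction n generalizing x with
    | zero => simp [cocycleIter]
    | succ n ih =>
      rw [cocycleIter, Matrix.det_mul, norm_mul, pow_succ _ n, mul_pow]
      gcongr
      exacts [ih _, hD x]
  exact log_le_lyapunov_s8 fun n x =>
    le_of_sq_le_sq ((hdet n x).trans (norm_det_fin_two_le_sq _)) (norm_nonneg _)

lemma exists_nhds_log_le_lyapunov_of_triangular {A : Matrix (Fin 2) (Fin 2) ℂ} (hA : A 1 0 = 0)
    (hr : r < ‖A 0 0‖₊) :
    ∃ V ∈ 𝓝 A, ∀ β D, (∀ x, D x ∈ V) → ENNReal.log r ≤ lyapunov β D := by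
  rcases lt_or_ge r ‖A 1 1‖₊ with h₁ | h₁
  · have hdet : (r : ℝ) ^ 2 < ‖A.det‖ := by
      rw [Matrix.det_fin_two, hA, mul_zero, sub_zero, norm_mul, sq]
      exact mul_lt_mul'' hr h₁ r.2 r.2
    have hcont : Continuous fun M : Matrix (Fin 2) (Fin 2) ℂ => ‖M.det‖ := by fun_prop
    exact ⟨_, hcont.continuousAt.eventually_const_lt hdet, fun β D hD =>
      log_le_lyapunov_of_det fun x => (hD x).le⟩
  · obtain ⟨s, hrs, hs⟩ := exists_between hr
    obtain ⟨δ, hδ, hV⟩ := ExpandsCone.exists_eventually_nhds hA (h₁.trans_lt hrs) hs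
    exact ⟨_, hV, fun β D hD => (ENNReal.log_monotone (ENNReal.coe_le_coe.2 hrs.le)).trans
      (log_le_lyapunov_of_expandsCone hδ hD)⟩

lemma exists_nhds_log_le_lyapunov {A : Matrix (Fin 2) (Fin 2) ℂ} (h : r < spectralRadius ℂ A) :
    ∃ V ∈ 𝓝 A, ∀ β D, (∀ x, D x ∈ V) → ENNReal.log r ≤ lyapunov β D := by
  obtain ⟨μ, hμ, hrμ⟩ : ∃ μ ∈ spectrum ℂ A, r < ‖μ‖₊ := by
    simpa [spectralRadius, lt_iSup_iff] using h
  obtain ⟨U, hU, hcol⟩ := exists_unitary_conj_col_eq_single hμ 0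
  have h₀ : (star U * A * U) 0 0 = μ := by simpa using congrFun hcol 0
  have h₁ : (star U * A * U) 1 0 = 0 := by simpa using congrFun hcol 1
  obtain ⟨V, hV, hbound⟩ := exists_nhds_log_le_lyapunov_of_triangular h₁ (h₀ ▸ hrμ)
  have hconj : Continuous fun M => star U * M * U := by fun_prop
  exact ⟨_, hconj.tendsto A hV, fun β D hD => lyapunov_unitary_conj hU β D ▸ hbound β _ hD⟩

end LowerBound

lemma spectralRadius_ne_top_of_finite_spectrum {𝕜 𝓐 : Type*} [NormedField 𝕜] [Ring 𝓐]
    [Algebra 𝕜 𝓐] {a : 𝓐} (ha : (spectrum 𝕜 a).Finite) : spectralRadius 𝕜 a ≠ ⊤ := by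
  obtain ⟨C, hC⟩ := (ha.image nnnorm).bddAbove
  exact ne_top_of_le_ne_top ENNReal.coe_ne_top
    (iSup₂_le fun z hz => ENNReal.coe_le_coe.2 (hC (Set.mem_image_of_mem _ hz)))

lemma eventually_forall_mem_of_tendstoUniformly_const {ι α X : Type*} [UniformSpace X]
    {F : ι → α → X} {a : X} {l : Filter ι} (hF : TendstoUniformly F (fun _ => a) l)
    {V : Set X} (hV : V ∈ 𝓝 a) : ∀ᶠ i in l, ∀ x, F i x ∈ V := by
  obtain ⟨u, hu, huV⟩ := UniformSpace.mem_nhds_iff.1 hV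
  exact (hF u hu).mono fun i hi x => huV (hi x)

theorem lyapunov_continuous_at_constant_general {ι : Type*} {l : Filter ι}
    (A : Matrix (Fin 2) (Fin 2) ℂ) (β : ι → ℝ) {D : ι → ℝ → Matrix (Fin 2) (Fin 2) ℂ}
    (hD : TendstoUniformly D (fun _ => A) l) :
    Tendsto (fun i => lyapunov (β i) (D i)) l (𝓝 (ENNReal.log (spectralRadius ℂ A))) := by
  refine tendsto_order.2 ⟨fun a ha => ?_, fun a ha => ?_⟩ <;>
    obtain ⟨a, rfl⟩ := ENNReal.log_surjective a
  · obtain ⟨r, har, hr⟩ := ENNReal.lt_iff_exists_nnreal_btwn.1 (ENNReal.log_lt_log_iff.1 ha)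
    obtain ⟨V, hV, hbound⟩ := exists_nhds_log_le_lyapunov hr
    filter_upwards [eventually_forall_mem_of_tendstoUniformly_const hD hV] with i hi
    exact (ENNReal.log_lt_log har).trans_le (hbound (β i) (D i) hi)
  · obtain ⟨r, hr, hra⟩ := ENNReal.lt_iff_exists_nnreal_btwn.1 (ENNReal.log_lt_log_iff.1 ha)
    obtain ⟨V, hV, hbound⟩ := exists_nhds_lyapunov_le_log hr
    filter_upwards [eventually_forall_mem_of_tendstoUniformly_const hD hV] with i hi
    exact (hbound (β i) (D i) hi).trans_lt (ENNReal.log_lt_log hra)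

/-- Joint continuity of the Lyapunov exponent at any constant cocycle,
for arbitrary frequency: if `βₙ → β₀` and `Dₙ → A` uniformly (each `Dₙ` continuous and
1-periodic, `A ∈ M₂(ℂ)` constant), then `L(βₙ, Dₙ) → log ρ(A)` in `ℝ ∪ {-∞}`,
where `ρ(A)` is the spectral radius of `A` and `log 0 := -∞`. -/
theorem lyapunov_continuous_at_constant
    (A : Matrix (Fin 2) (Fin 2) ℂ) (β₀ : ℝ) (βseq : ℕ → ℝ)
    (Dseq : ℕ → ℝ → Matrix (Fin 2) (Fin 2) ℂ)
    (hDn : ∀ n, Continuous (Dseq n)) (hDnper : ∀ n, Function.Periodic (Dseq n) 1)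
    (hβ : Tendsto βseq atTop (nhds β₀))
    (hunif : TendstoUniformly Dseq (fun _ => A) atTop) :
    Tendsto (fun n => lyapunov (βseq n) (Dseq n)) atTop
      (nhds (if spectralRadius ℂ A = 0 then (⊥ : EReal)
        else ((Real.log (spectralRadius ℂ A).toReal : ℝ) : EReal))) := by
  simpa [ENNReal.log, spectralRadius_ne_top_of_finite_spectrum A.finite_spectrum] using
    lyapunov_continuous_at_constant_general A βseq hunif
end
end

section
/- Let β ∈ ℝ (not necessarily irrational), δ > 0, and let D be a holomorphic function from the open strip {z ∈ ℂ : |Im z| < δ} to M₂(ℂ), 1-periodic (D(z+1) = D(z)), such that det D is not identically zero. Then for every ε ∈ (−δ, δ) the Lyapunov exponent L(β, D_ε) is finite, and the function ε ↦ L(β, D_ε) is convex on (−δ, δ). -/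
open MeasureTheory Filter Complex
open scoped ENNReal Real NNReal

noncomputable section

attribute [local instance] Matrix.frobeniusNormedAddCommGroup

attribute [local instance] Matrix.frobeniusNormedSpace

/-!
Along the line `Im z = y`, the mean of `log ‖F‖` over a period of a holomorphic function `F` is a
limit of the averages `N⁻¹ ∑ log ‖F (x + k/N + iy)‖`, uniformly in `x`. The three lines theorem
applied to the product of the translates of `F` therefore makes this mean a convex function of `y`.
Zeros of `F` are removed by replacing `F` with `(F, c)`, whose sup norm is `max ‖F‖ c`, and letting
the constant `c` tend to `0`.

For `F = D^{(n)}` these means form a subadditive sequence in `n`, so the Lyapunov exponent is the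
pointwise limit of convex functions. It is not `-∞` because `2 |det M| ≤ ‖M‖²` and the mean of
`log |det D^{(n)}|` is exactly `n` times that of `log |det D|`.
-/

section Analysis

theorem uniformContinuous_of_continuous_of_periodic {X : Type*} [UniformSpace X] {φ : ℝ → X}
    {T : ℝ} (hT : 0 < T) (hφ : Continuous φ) (hper : Function.Periodic φ T) :
    UniformContinuous φ := by
  have : Fact (0 < T) := ⟨hT⟩
  have hlift : Continuous (hper.lift : AddCircle T → X) := continuous_coinduced_dom.2 hφ
  have hmk : UniformContinuous (QuotientAddGroup.mk' (AddSubgroup.zmultiples T) :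
      ℝ → AddCircle T) :=
    uniformContinuous_addMonoidHom_of_continuous (AddCircle.continuous_mk' T)
  exact (CompactSpace.uniformContinuous_of_continuous hlift).comp hmk

variable {E : Type*} [NormedAddCommGroup E]

theorem norm_smul_sub_integral_le [NormedSpace ℝ E] [CompleteSpace E] {φ : ℝ → E} {x h η : ℝ}
    (hh : 0 ≤ h) (hφ : IntervalIntegrable φ volume x (x + h))
    (hη : ∀ t ∈ Set.Ioc x (x + h), ‖φ x - φ t‖ ≤ η) :
    ‖h • φ x - ∫ t in x..x + h, φ t‖ ≤ h * η := by
  have hconst : h • φ x = ∫ _ in x..x + h, φ x := by simp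
  rw [hconst, ← intervalIntegral.integral_sub (by simp) hφ]
  have hle := intervalIntegral.norm_integral_le_of_norm_le_const (a := x) (b := x + h)
    (f := fun t => φ x - φ t) (C := η)
    (by simpa only [Set.uIoc_of_le (le_add_of_nonneg_right hh)] using hη)
  rwa [add_sub_cancel_left, abs_of_nonneg hh, mul_comm] at hle

theorem integral_eq_sum_integral_of_periodic [NormedSpace ℝ E] {φ : ℝ → E} {T : ℝ}
    (hφ : Continuous φ) (hper : Function.Periodic φ T) {N : ℕ} (hN : N ≠ 0) (x : ℝ) :
    ∫ t in (0 : ℝ)..T, φ t =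
      ∑ k ∈ Finset.range N, ∫ t in (x + k * (T / N))..(x + k * (T / N) + T / N), φ t := by
  have hadj := intervalIntegral.sum_integral_adjacent_intervals (n := N)
    (a := fun k : ℕ => x + k * (T / N)) fun k _ => hφ.intervalIntegrable (μ := volume) _ _
  have hT : (N : ℝ) * (T / N) = T := mul_div_cancel₀ T (Nat.cast_ne_zero.2 hN)
  simp only [Nat.cast_add, Nat.cast_one, add_one_mul, ← add_assoc, Nat.cast_zero, zero_mul,
    add_zero, hT] at hadj
  rw [hadj, hper.intervalIntegral_add_eq x 0, zero_add]

theorem tendstoUniformly_riemannSum_of_periodic [NormedSpace ℝ E] [CompleteSpace E] {φ : ℝ → E}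
    {T : ℝ} (hT : 0 < T) (hφ : Continuous φ) (hper : Function.Periodic φ T) :
    TendstoUniformly (fun (N : ℕ) x => (N : ℝ)⁻¹ • ∑ k ∈ Finset.range N, φ (x + k * (T / N)))
      (fun _ => T⁻¹ • ∫ t in (0 : ℝ)..T, φ t) atTop := by
  refine Metric.tendstoUniformly_iff.2 fun η hη => ?_
  obtain ⟨r, hr, hφr⟩ := Metric.uniformContinuous_iff.1
    (uniformContinuous_of_continuous_of_periodic hT hφ hper) (η / 2) (half_pos hη)
  filter_upwards [(tendsto_const_div_atTop_nhds_zero_nat T).eventually_lt_const hr,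
    eventually_ne_atTop 0] with N hNr hN x
  have hstep : 0 < T / N := by positivity
  have hcell : ∀ k ∈ Finset.range N,
      ‖(T / N) • φ (x + k * (T / N)) -
        ∫ t in (x + k * (T / N))..(x + k * (T / N) + T / N), φ t‖ ≤ T / N * (η / 2) :=
    fun k _ => norm_smul_sub_integral_le hstep.le (hφ.intervalIntegrable _ _) fun t ht => by
      rw [← dist_eq_norm]
      refine (hφr ?_).le
      rw [Real.dist_eq, abs_lt]
      constructor <;> linarith [ht.1, ht.2]
  have hscale : (N : ℝ)⁻¹ • ∑ k ∈ Finset.range N, φ (x + k * (T / N)) =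
      T⁻¹ • ∑ k ∈ Finset.range N, (T / N) • φ (x + k * (T / N)) := by
    rw [← Finset.smul_sum, smul_smul, div_eq_mul_inv, inv_mul_cancel_left₀ hT.ne']
  rw [dist_comm, dist_eq_norm, hscale, integral_eq_sum_integral_of_periodic hφ hper hN x,
    ← smul_sub, ← Finset.sum_sub_distrib, norm_smul, norm_inv, Real.norm_of_nonneg hT.le]
  calc T⁻¹ * ‖_‖ ≤ T⁻¹ * ∑ k ∈ Finset.range N, T / N * (η / 2) := by
        gcongr
        exact norm_sum_le_of_le _ hcell
    _ = η / 2 := by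
        rw [Finset.sum_const, Finset.card_range, nsmul_eq_mul]
        field_simp
    _ < η := half_lt_self hη

theorem convexOn_of_tendsto {𝕜 V β ι : Type*} [Semiring 𝕜] [PartialOrder 𝕜] [AddCommMonoid V]
    [SMul 𝕜 V] [AddCommMonoid β] [PartialOrder β] [SMul 𝕜 β] [TopologicalSpace β]
    [OrderClosedTopology β] [ContinuousConstSMul 𝕜 β] [ContinuousAdd β] {l : Filter ι} [l.NeBot]
    {s : Set V} {f : ι → V → β} {g : V → β} (hf : ∀ i, ConvexOn 𝕜 s (f i))
    (hg : ∀ x ∈ s, Tendsto (fun i => f i x) l (nhds (g x))) : ConvexOn 𝕜 s g := by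
  obtain ⟨i₀⟩ := l.nonempty_of_neBot
  refine ⟨(hf i₀).1, fun x hx y hy p q hp hq hpq => ?_⟩
  exact le_of_tendsto_of_tendsto' (hg _ ((hf i₀).1 hx hy hp hq hpq))
    (((hg x hx).const_smul p).add ((hg y hy).const_smul q))
    fun i => (hf i).2 hx hy hp hq hpq

theorem tendsto_integral_max_atBot {α : Type*} [MeasurableSpace α] {μ : Measure α} {f : α → ℝ}
    (hf : Integrable f μ) :
    Tendsto (fun b => ∫ x, max (f x) b ∂μ) atBot (nhds (∫ x, f x ∂μ)) := by
  refine tendsto_integral_filter_of_dominated_convergence (fun x => |f x|) ?_ ?_ hf.abs ?_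
  · exact Eventually.of_forall fun b => hf.aestronglyMeasurable.sup aestronglyMeasurable_const
  · filter_upwards [eventually_le_atBot 0] with b hb
    refine Eventually.of_forall fun x => abs_le.2 ⟨?_, ?_⟩
    · exact (neg_abs_le _).trans (le_max_left _ _)
    · exact max_le (le_abs_self _) (hb.trans (abs_nonneg _))
  · refine Eventually.of_forall fun x => tendsto_const_nhds.congr' ?_
    filter_upwards [eventually_le_atBot (f x)] with b hb
    rw [max_eq_left hb]

theorem iInf_coe_div_eq_coe_subadditive_lim {u : ℕ → ℝ} (hu : Subadditive u)
    (hbdd : BddBelow (Set.range fun n => u n / n)) :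
    ⨅ n : ℕ, ((u (n + 1) / (n + 1 : ℕ) : ℝ) : EReal) = (hu.lim : EReal) := by
  refine le_antisymm ?_ (le_iInf fun n => EReal.coe_le_coe (hu.lim_le_div hbdd n.succ_ne_zero))
  have hlim : Tendsto (fun n : ℕ => ((u (n + 1) / (n + 1 : ℕ) : ℝ) : EReal)) atTop
      (nhds (hu.lim : EReal)) :=
    (continuous_coe_real_ereal.tendsto _).comp
      ((hu.tendsto_lim hbdd).comp (tendsto_add_atTop_nat 1))
  exact ge_of_tendsto' hlim (iInf_le _)

theorem logIntegral_eq_coe_integral {g : ℝ → ℝ}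
    (hg : IntervalIntegrable (fun x => Real.log (g x)) volume 0 1)
    (hne : ∀ᵐ x ∂volume.restrict (Set.Ioc 0 1), g x ≠ 0) :
    logIntegral g = ((∫ x in (0 : ℝ)..1, Real.log (g x) : ℝ) : EReal) := by
  rw [intervalIntegrable_iff_integrableOn_Ioc_of_le zero_le_one] at hg
  have hneg : (∫⁻ x in Set.Ioc (0 : ℝ) 1,
      if g x = 0 then (⊤ : ℝ≥0∞) else ENNReal.ofReal (-Real.log (g x))) =
      ∫⁻ x in Set.Ioc (0 : ℝ) 1, ENNReal.ofReal (-Real.log (g x)) :=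
    lintegral_congr_ae (hne.mono fun x hx => if_neg hx)
  rw [logIntegral, hneg, intervalIntegral.integral_of_le zero_le_one,
    integral_eq_lintegral_pos_part_sub_lintegral_neg_part hg, EReal.coe_sub,
    EReal.coe_ennreal_toReal hg.lintegral_lt_top.ne,
    EReal.coe_ennreal_toReal hg.fun_neg.lintegral_lt_top.ne]

open HadamardThreeLines in
theorem prod_norm_le_interp_of_mem_verticalClosedStrip [NormedSpace ℂ E] {ι : Type*}
    {s : Finset ι} {f : ι → ℂ → E} {z : ℂ} {a b l u : ℝ} (hlu : l < u)
    (hz : z ∈ verticalClosedStrip l u)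
    (hd : ∀ k ∈ s, DifferentiableOn ℂ (f k) (verticalClosedStrip l u)) {C : ℝ}
    (hC : ∀ k ∈ s, ∀ w ∈ verticalClosedStrip l u, ‖f k w‖ ≤ C)
    (ha : ∀ w ∈ re ⁻¹' {l}, ∏ k ∈ s, ‖f k w‖ ≤ a) (hb : ∀ w ∈ re ⁻¹' {u}, ∏ k ∈ s, ‖f k w‖ ≤ b) :
    ∏ k ∈ s, ‖f k z‖ ≤ a ^ (1 - (z.re - l) / (u - l)) * b ^ ((z.re - l) / (u - l)) := by
  -- Vectors cannot be multiplied: pass to scalars by functionals that are norming at `z`.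
  choose g hg_norm hg using fun k : ι => exists_dual_vector'' ℂ (f k z)
  let G : ℂ → ℂ := fun w => ∏ k ∈ s, g k (f k w)
  have hG_le : ∀ w, ‖G w‖ ≤ ∏ k ∈ s, ‖f k w‖ := fun w => by
    rw [norm_prod]
    exact Finset.prod_le_prod (fun _ _ => norm_nonneg _) fun k _ =>
      ((g k).le_of_opNorm_le (hg_norm k) _).trans_eq (one_mul _)
  have hGz : ‖G z‖ = ∏ k ∈ s, ‖f k z‖ := by simp [G, hg]
  have hG_diff : DiffContOnCl ℂ G (verticalStrip l u) := by
    refine DifferentiableOn.diffContOnCl ?_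
    rw [verticalStrip, closure_preimage_re, closure_Ioo hlu.ne]
    exact DifferentiableOn.fun_finsetProd fun k hk =>
      (g k).differentiable.comp_differentiableOn (hd k hk)
  have hG_bdd : BddAbove ((norm ∘ G) '' verticalClosedStrip l u) := by
    refine ⟨∏ _k ∈ s, C, ?_⟩
    rintro _ ⟨w, hw, rfl⟩
    exact (hG_le w).trans
      (Finset.prod_le_prod (fun _ _ => norm_nonneg _) fun k hk => hC k hk w hw)
  rw [← hGz]
  exact norm_le_interp_of_mem_verticalClosedStrip' hlu hz hG_diff hG_bdd
    (fun w hw => (hG_le w).trans (ha w hw)) fun w hw => (hG_le w).trans (hb w hw)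

end Analysis

/-- The function `F` is holomorphic and 1-periodic on the strip `im ⁻¹' s`. Only values of `F` on
the strip are constrained. -/
structure PeriodicHolomorphicOn {E : Type*} [NormedAddCommGroup E] [NormedSpace ℂ E] (F : ℂ → E)
    (s : Set ℝ) : Prop where
  differentiableOn : DifferentiableOn ℂ F (im ⁻¹' s)
  map_add_one : ∀ z : ℂ, z.im ∈ s → F (z + 1) = F z

/-- The mean of `log ‖F‖` over one period `x ∈ [0, 1]` of the horizontal line `x + iy`, with the
convention `log 0 = 0`. -/
def logMean {E : Type*} [Norm E] (F : ℂ → E) (y : ℝ) : ℝ :=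
  ∫ x in (0 : ℝ)..1, Real.log ‖F ((x : ℂ) + (y : ℂ) * I)‖

section Line

variable {E : Type*} [NormedAddCommGroup E] [NormedSpace ℂ E] [CompleteSpace E] {F : ℂ → E}
  {s : Set ℝ} {y : ℝ}

theorem analyticOnNhd_line (hF : DifferentiableOn ℂ F (im ⁻¹' s)) (hs : IsOpen s) (hy : y ∈ s) :
    AnalyticOnNhd ℝ (fun x : ℝ => F ((x : ℂ) + (y : ℂ) * I)) Set.univ := fun x _ =>
  have hFx : AnalyticAt ℝ F ((x : ℂ) + (y : ℂ) * I) :=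
    (hF.analyticOnNhd (hs.preimage continuous_im) _ (by simpa using hy)).restrictScalars
  have hline : AnalyticAt ℝ (fun x : ℝ => (x : ℂ) + (y : ℂ) * I) x :=
    (ofRealCLM.analyticAt x).add analyticAt_const
  hFx.fun_comp_of_eq hline rfl

theorem intervalIntegrable_log_norm_line (hF : DifferentiableOn ℂ F (im ⁻¹' s)) (hs : IsOpen s)
    (hy : y ∈ s) :
    IntervalIntegrable (fun x : ℝ => Real.log ‖F ((x : ℂ) + (y : ℂ) * I)‖) volume 0 1 :=
  ((analyticOnNhd_line hF hs hy).mono (Set.subset_univ _)).meromorphicOn.intervalIntegrable_log_norm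

theorem eqOn_zero_strip_of_eq_zero_line (hF : DifferentiableOn ℂ F (im ⁻¹' s)) (hs : IsOpen s)
    (hconv : Convex ℝ s) (hy : y ∈ s) (hzero : ∀ x : ℝ, F ((x : ℂ) + (y : ℂ) * I) = 0) :
    Set.EqOn F 0 (im ⁻¹' s) := by
  have hline : Tendsto (fun x : ℝ => (x : ℂ) + (y : ℂ) * I) (nhdsWithin 0 {0}ᶜ)
      (nhdsWithin (((0 : ℝ) : ℂ) + (y : ℂ) * I) {((0 : ℝ) : ℂ) + (y : ℂ) * I}ᶜ) := by
    refine (Continuous.continuousWithinAt (by fun_prop)).tendsto_nhdsWithin fun x hx => ?_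
    simpa using hx
  have hF_analytic := hF.analyticOnNhd (hs.preimage continuous_im)
  exact hF_analytic.eqOn_zero_of_preconnected_of_frequently_eq_zero
    (hconv.linear_preimage imLm).isPreconnected (by simpa using hy)
    (hline.frequently (Eventually.of_forall hzero).frequently)

theorem ae_ne_zero_line (hF : DifferentiableOn ℂ F (im ⁻¹' s)) (hs : IsOpen s)
    (hconv : Convex ℝ s) (hne : ∃ z : ℂ, z.im ∈ s ∧ F z ≠ 0) (hy : y ∈ s) :
    ∀ᵐ x : ℝ, F ((x : ℂ) + (y : ℂ) * I) ≠ 0 := by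
  obtain ⟨z, hz, hFz⟩ := hne
  rcases (analyticOnNhd_line hF hs hy).eqOn_zero_or_eventually_ne_zero_of_preconnected
    isPreconnected_univ with hzero | hcodiscrete
  · exact absurd (eqOn_zero_strip_of_eq_zero_line hF hs hconv hy
      (fun x => hzero (Set.mem_univ x)) hz) hFz
  · have hae := ae_restrict_le_codiscreteWithin (μ := (volume : Measure ℝ)) MeasurableSet.univ
      hcodiscrete
    rwa [Measure.restrict_univ] at hae

end Line

theorem ofReal_add_line (x t y : ℝ) :
    ((x + t : ℝ) : ℂ) + (y : ℂ) * I = (x : ℂ) + (y : ℂ) * I + t := by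
  push_cast
  ring

namespace PeriodicHolomorphicOn

variable {E : Type*} [NormedAddCommGroup E] [NormedSpace ℂ E] {F : ℂ → E} {s : Set ℝ}

theorem periodic_line (hF : PeriodicHolomorphicOn F s) {y : ℝ} (hy : y ∈ s) :
    Function.Periodic (fun x : ℝ => F ((x : ℂ) + (y : ℂ) * I)) 1 := fun x => by
  simp only [ofReal_add_line, ofReal_one]
  exact hF.map_add_one _ (by simpa using hy)

theorem comp_add_ofReal (hF : PeriodicHolomorphicOn F s) (t : ℝ) :
    PeriodicHolomorphicOn (fun z => F (z + t)) s where
  differentiableOn := hF.differentiableOn.comp (by fun_prop) fun z hz => by simpa using hz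
  map_add_one z hz := by
    rw [add_right_comm]
    exact hF.map_add_one _ (by simpa using hz)

theorem prodMk_const {E' : Type*} [NormedAddCommGroup E'] [NormedSpace ℂ E']
    (hF : PeriodicHolomorphicOn F s) (c : E') : PeriodicHolomorphicOn (fun z => (F z, c)) s where
  differentiableOn := hF.differentiableOn.prodMk (differentiableOn_const c)
  map_add_one z hz := by rw [hF.map_add_one z hz]

theorem mul {A : Type*} [NormedRing A] [NormedAlgebra ℂ A] {F G : ℂ → A}
    (hF : PeriodicHolomorphicOn F s) (hG : PeriodicHolomorphicOn G s) :
    PeriodicHolomorphicOn (fun z => F z * G z) s where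
  differentiableOn := hF.differentiableOn.fun_mul hG.differentiableOn
  map_add_one z hz := by rw [hF.map_add_one z hz, hG.map_add_one z hz]

theorem exists_norm_le (hF : PeriodicHolomorphicOn F s) {K : Set ℝ} (hK : IsCompact K)
    (hKs : K ⊆ s) : ∃ C : ℝ, ∀ z : ℂ, z.im ∈ K → ‖F z‖ ≤ C := by
  obtain ⟨C, hC⟩ := (isCompact_Icc.reProdIm hK).exists_bound_of_continuousOn (f := F)
    (hF.differentiableOn.continuousOn.mono fun z hz => hKs hz.2 : ContinuousOn F (Set.Icc 0 1 ×ℂ K))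
  refine ⟨C, fun z hz => ?_⟩
  obtain ⟨x, hx, hzx⟩ := (hF.periodic_line (hKs hz)).exists_mem_Ico₀ one_pos z.re
  rw [re_add_im] at hzx
  rw [hzx]
  exact hC _ (by simpa [mem_reProdIm] using ⟨⟨hx.1, hx.2.le⟩, hz⟩)

theorem prod_norm_translate_le (hF : PeriodicHolomorphicOn F s) (hconv : Convex ℝ s)
    {a b p q : ℝ} (ha : a ∈ s) (hb : b ∈ s) (hab : a < b) (hp : 0 ≤ p) (hq : 0 ≤ q)
    (hpq : p + q = 1) {ι : Type*} (S : Finset ι) (θ : ι → ℝ) {A B : ℝ}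
    (hA : ∀ x : ℝ, ∏ k ∈ S, ‖F ((x + θ k : ℝ) + (a : ℂ) * I)‖ ≤ A)
    (hB : ∀ x : ℝ, ∏ k ∈ S, ‖F ((x + θ k : ℝ) + (b : ℂ) * I)‖ ≤ B) (x : ℝ) :
    ∏ k ∈ S, ‖F ((x + θ k : ℝ) + ((p * a + q * b : ℝ) : ℂ) * I)‖ ≤ A ^ p * B ^ q := by
  have hIcc : Set.Icc a b ⊆ s := hconv.ordConnected.out ha hb
  obtain ⟨C, hC⟩ := hF.exists_norm_le isCompact_Icc hIcc
  have hrot : ∀ (w : ℂ) k, w * I + θ k = ((-w.im + θ k : ℝ) : ℂ) + (w.re : ℂ) * I := fun w k => by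
    apply Complex.ext <;> simp
  have hc : p * a + q * b ∈ Set.Icc a b := convex_Icc a b (Set.left_mem_Icc.2 hab.le)
    (Set.right_mem_Icc.2 hab.le) hp hq hpq
  have hq_eq : (p * a + q * b - a) / (b - a) = q := by
    rw [div_eq_iff (sub_pos.2 hab).ne', ← sub_eq_iff_eq_add.2 hpq.symm]
    ring
  have hthree := prod_norm_le_interp_of_mem_verticalClosedStrip (s := S)
    (f := fun k w => F (w * I + θ k)) (z := (p * a + q * b : ℝ) - x * I) (a := A) (b := B) hab
    (by simpa [HadamardThreeLines.verticalClosedStrip] using hc)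
    (fun k _ => hF.differentiableOn.comp (by fun_prop) fun w hw => by simpa using hIcc hw)
    (fun k _ w hw => hC _ (by simpa [HadamardThreeLines.verticalClosedStrip] using hw))
    (fun w hw => by simpa only [hrot, Set.mem_singleton_iff.1 hw] using hA (-w.im))
    (fun w hw => by simpa only [hrot, Set.mem_singleton_iff.1 hw] using hB (-w.im))
  have hre : ((p * a + q * b : ℝ) - x * I : ℂ).re = p * a + q * b := by simp
  have him : -((p * a + q * b : ℝ) - x * I : ℂ).im = x := by simp
  simp only [hrot, hre, him, hq_eq] at hthree
  rwa [sub_eq_iff_eq_add.2 hpq.symm] at hthree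

theorem sum_log_norm_translate_le (hF : PeriodicHolomorphicOn F s) (hconv : Convex ℝ s)
    (hne : ∀ z : ℂ, z.im ∈ s → F z ≠ 0) {a b p q : ℝ} (ha : a ∈ s) (hb : b ∈ s) (hab : a < b)
    (hp : 0 ≤ p) (hq : 0 ≤ q) (hpq : p + q = 1) {ι : Type*} (S : Finset ι) (θ : ι → ℝ) {A B : ℝ}
    (hA : ∀ x : ℝ, ∑ k ∈ S, Real.log ‖F ((x + θ k : ℝ) + (a : ℂ) * I)‖ ≤ A)
    (hB : ∀ x : ℝ, ∑ k ∈ S, Real.log ‖F ((x + θ k : ℝ) + (b : ℂ) * I)‖ ≤ B) (x : ℝ) :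
    ∑ k ∈ S, Real.log ‖F ((x + θ k : ℝ) + ((p * a + q * b : ℝ) : ℂ) * I)‖ ≤ p * A + q * B := by
  have hprod : ∀ y ∈ s, ∀ x : ℝ, ∏ k ∈ S, ‖F ((x + θ k : ℝ) + (y : ℂ) * I)‖ =
      Real.exp (∑ k ∈ S, Real.log ‖F ((x + θ k : ℝ) + (y : ℂ) * I)‖) := fun y hy x => by
    rw [Real.exp_sum]
    exact Finset.prod_congr rfl fun k _ =>
      (Real.exp_log (norm_pos_iff.2 (hne _ (by simpa using hy)))).symm
  have hc : p * a + q * b ∈ s := hconv ha hb hp hq hpq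
  have hthree := hF.prod_norm_translate_le hconv ha hb hab hp hq hpq S θ
    (fun x => (hprod a ha x).trans_le (Real.exp_le_exp.2 (hA x)))
    (fun x => (hprod b hb x).trans_le (Real.exp_le_exp.2 (hB x))) x
  rwa [hprod _ hc, ← Real.exp_mul, ← Real.exp_mul, ← Real.exp_add,
    Real.exp_le_exp, mul_comm A, mul_comm B] at hthree

theorem tendstoUniformly_mean_log_norm (hF : PeriodicHolomorphicOn F s)
    (hne : ∀ z : ℂ, z.im ∈ s → F z ≠ 0) {y : ℝ} (hy : y ∈ s) :
    TendstoUniformly (fun (N : ℕ) (x : ℝ) => (N : ℝ)⁻¹ *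
        ∑ k ∈ Finset.range N, Real.log ‖F ((x + k * (1 / N) : ℝ) + (y : ℂ) * I)‖)
      (fun _ => logMean F y) atTop := by
  have hline : Continuous fun x : ℝ => F ((x : ℂ) + (y : ℂ) * I) :=
    hF.differentiableOn.continuousOn.comp_continuous (by fun_prop) fun x => by simpa using hy
  have hlog : Continuous fun x : ℝ => Real.log ‖F ((x : ℂ) + (y : ℂ) * I)‖ :=
    hline.norm.log fun x => norm_ne_zero_iff.2 (hne _ (by simpa using hy))
  simpa only [inv_one, one_mul, smul_eq_mul, logMean] using
    tendstoUniformly_riemannSum_of_periodic one_pos hlog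
      ((hF.periodic_line hy).comp fun v => Real.log ‖v‖)

theorem eventually_sum_log_norm_le (hF : PeriodicHolomorphicOn F s)
    (hne : ∀ z : ℂ, z.im ∈ s → F z ≠ 0) {y η : ℝ} (hy : y ∈ s) (hη : 0 < η) :
    ∀ᶠ N : ℕ in atTop, ∀ x : ℝ,
      ∑ k ∈ Finset.range N, Real.log ‖F ((x + k * (1 / N) : ℝ) + (y : ℂ) * I)‖ ≤
        N * (logMean F y + η) := by
  filter_upwards [Metric.tendstoUniformly_iff.1 (hF.tendstoUniformly_mean_log_norm hne hy) η hη,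
    eventually_gt_atTop 0] with N hdist hN x
  rw [← inv_mul_le_iff₀ (Nat.cast_pos.2 hN)]
  linarith [(abs_lt.1 (Real.dist_eq _ _ ▸ hdist x)).1]

theorem convexOn_logMean_of_ne_zero (hF : PeriodicHolomorphicOn F s) (hconv : Convex ℝ s)
    (hne : ∀ z : ℂ, z.im ∈ s → F z ≠ 0) : ConvexOn ℝ s (logMean F) := by
  refine LinearOrder.convexOn_of_lt hconv fun a ha b hb hab p q hp hq hpq => ?_
  refine le_of_forall_pos_le_add fun η hη => ?_
  have hc := hF.tendstoUniformly_mean_log_norm hne (hconv ha hb hp.le hq.le hpq)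
  refine le_of_tendsto (hc.tendsto_at 0) ?_
  filter_upwards [hF.eventually_sum_log_norm_le hne ha hη,
    hF.eventually_sum_log_norm_le hne hb hη, eventually_gt_atTop 0] with N hNa hNb hN
  have hthree := hF.sum_log_norm_translate_le hconv hne ha hb hab hp.le hq.le hpq
    (Finset.range N) (fun k => k * (1 / N)) hNa hNb 0
  rw [smul_eq_mul, smul_eq_mul, inv_mul_le_iff₀ (Nat.cast_pos.2 hN)]
  refine hthree.trans_eq ?_
  linear_combination (N : ℝ) * η * hpq

theorem convexOn_logMean [CompleteSpace E] (hF : PeriodicHolomorphicOn F s) (hs : IsOpen s)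
    (hconv : Convex ℝ s) (hne : ∀ y ∈ s, ∀ᵐ x : ℝ, F ((x : ℂ) + (y : ℂ) * I) ≠ 0) :
    ConvexOn ℝ s (logMean F) := by
  have hconvex_max : ∀ b : ℝ, ConvexOn ℝ s (logMean fun z => (F z, (Real.exp b : ℂ))) := fun b =>
    (hF.prodMk_const _).convexOn_logMean_of_ne_zero hconv fun z _ h =>
      ofReal_ne_zero.2 (Real.exp_ne_zero b) (Prod.ext_iff.1 h).2
  refine convexOn_of_tendsto (l := atBot) hconvex_max fun y hy => ?_
  have hint := intervalIntegrable_log_norm_line hF.differentiableOn hs hy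
  have hlog_max : ∀ᵐ x : ℝ, ∀ b : ℝ, Real.log ‖(F ((x : ℂ) + (y : ℂ) * I), (Real.exp b : ℂ))‖ =
      max (Real.log ‖F ((x : ℂ) + (y : ℂ) * I)‖) b := by
    filter_upwards [hne y hy] with x hx b
    rw [Prod.norm_mk, norm_real, Real.norm_of_nonneg (Real.exp_nonneg b),
      Real.strictMonoOn_log.monotoneOn.map_max (norm_pos_iff.2 hx) (Real.exp_pos b), Real.log_exp]
  rw [intervalIntegrable_iff_integrableOn_Ioc_of_le zero_le_one] at hint
  simp only [logMean, intervalIntegral.integral_of_le zero_le_one]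
  refine (tendsto_integral_max_atBot hint).congr fun b => integral_congr_ae ?_
  exact (ae_restrict_of_ae hlog_max).mono fun x hx => (hx b).symm

end PeriodicHolomorphicOn

section LogMean

theorem logMean_comp_add_ofReal {E : Type*} [Norm E] {F : ℂ → E} {y : ℝ}
    (hF : Function.Periodic (fun x : ℝ => F ((x : ℂ) + (y : ℂ) * I)) 1) (t : ℝ) :
    logMean (fun z => F (z + t)) y = logMean F y := by
  have hlog := hF.comp fun v => Real.log ‖v‖
  simp only [logMean, ← ofReal_add_line]
  rw [intervalIntegral.integral_comp_add_right (fun x : ℝ => Real.log ‖F ((x : ℂ) + (y : ℂ) * I)‖),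
    zero_add, add_comm 1 t]
  exact (hlog.intervalIntegral_add_eq t 0).trans (by rw [zero_add]; rfl)

theorem logMean_mul_le {A : Type*} [NormedRing A] [NormedAlgebra ℂ A] [CompleteSpace A]
    {F G : ℂ → A} {s : Set ℝ} {y : ℝ} (hF : DifferentiableOn ℂ F (im ⁻¹' s))
    (hG : DifferentiableOn ℂ G (im ⁻¹' s)) (hs : IsOpen s) (hy : y ∈ s)
    (hne : ∀ᵐ x : ℝ, F ((x : ℂ) + (y : ℂ) * I) * G ((x : ℂ) + (y : ℂ) * I) ≠ 0) :
    logMean (fun z => F z * G z) y ≤ logMean F y + logMean G y := by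
  have hFint := intervalIntegrable_log_norm_line hF hs hy
  have hGint := intervalIntegrable_log_norm_line hG hs hy
  rw [logMean, logMean, logMean, ← intervalIntegral.integral_add hFint hGint]
  refine intervalIntegral.integral_mono_ae zero_le_one
    (intervalIntegrable_log_norm_line (hF.fun_mul hG) hs hy) (hFint.add hGint) ?_
  filter_upwards [hne] with x hx
  rw [← Real.log_mul (norm_ne_zero_iff.2 (left_ne_zero_of_mul hx))
    (norm_ne_zero_iff.2 (right_ne_zero_of_mul hx))]
  exact Real.log_le_log (norm_pos_iff.2 hx) (norm_mul_le _ _)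

theorem logMean_mul {f g : ℂ → ℂ} {s : Set ℝ} {y : ℝ} (hf : DifferentiableOn ℂ f (im ⁻¹' s))
    (hg : DifferentiableOn ℂ g (im ⁻¹' s)) (hs : IsOpen s) (hy : y ∈ s)
    (hne : ∀ᵐ x : ℝ, f ((x : ℂ) + (y : ℂ) * I) * g ((x : ℂ) + (y : ℂ) * I) ≠ 0) :
    logMean (fun z => f z * g z) y = logMean f y + logMean g y := by
  rw [logMean, logMean, logMean, ← intervalIntegral.integral_add
    (intervalIntegrable_log_norm_line hf hs hy) (intervalIntegrable_log_norm_line hg hs hy)]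
  refine intervalIntegral.integral_congr_ae ?_
  filter_upwards [hne] with x hx _
  rw [norm_mul, Real.log_mul (norm_ne_zero_iff.2 (left_ne_zero_of_mul hx))
    (norm_ne_zero_iff.2 (right_ne_zero_of_mul hx))]

end LogMean

/-- The cocycle iterate `D(z+(n-1)β)⋯D(z)` as a function of a complex variable. The values of `D`
lie in an arbitrary monoid, so that the determinant of a matrix cocycle is again a cocycle. -/
def complexCocycle {A : Type*} [Monoid A] (D : ℂ → A) (β : ℝ) : ℕ → ℂ → A
  | 0, _ => 1
  | n + 1, z => complexCocycle D β n (z + β) * D z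

section Cocycle

variable {A : Type*} {β : ℝ}

theorem cocycleIter_line (D : ℂ → Matrix (Fin 2) (Fin 2) ℂ) (β y : ℝ) (n : ℕ) (x : ℝ) :
    cocycleIter (fun x : ℝ => D ((x : ℂ) + (y : ℂ) * I)) β n x =
      complexCocycle D β n ((x : ℂ) + (y : ℂ) * I) := by
  induction n generalizing x with
  | zero => rfl
  | succ n ih => rw [cocycleIter, complexCocycle, ih, ofReal_add_line]

theorem map_complexCocycle {M N : Type*} [Monoid M] [Monoid N] (φ : M →* N) (D : ℂ → M) (n : ℕ)
    (z : ℂ) : φ (complexCocycle D β n z) = complexCocycle (fun w => φ (D w)) β n z := by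
  induction n generalizing z with
  | zero => exact map_one φ
  | succ n ih => rw [complexCocycle, complexCocycle, map_mul, ih]

theorem complexCocycle_add [Monoid A] (D : ℂ → A) (m n : ℕ) (z : ℂ) :
    complexCocycle D β (m + n) z =
      complexCocycle D β m (z + (n * β : ℝ)) * complexCocycle D β n z := by
  induction n generalizing z with
  | zero => simp [complexCocycle]
  | succ n ih =>
    rw [← add_assoc, complexCocycle, ih, complexCocycle, mul_assoc]
    congr 2
    push_cast
    ring

theorem ae_complexCocycle_ne_zero [MonoidWithZero A] [NoZeroDivisors A] [Nontrivial A]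
    {D : ℂ → A} {y : ℝ} (hD : ∀ᵐ x : ℝ, D ((x : ℂ) + (y : ℂ) * I) ≠ 0) (n : ℕ) :
    ∀ᵐ x : ℝ, complexCocycle D β n ((x : ℂ) + (y : ℂ) * I) ≠ 0 := by
  induction n with
  | zero => exact Eventually.of_forall fun _ => one_ne_zero
  | succ n ih =>
    have hshift := (measurePreserving_add_right volume β).quasiMeasurePreserving.ae ih
    filter_upwards [hshift, hD] with x hx hDx
    rw [ofReal_add_line] at hx
    exact mul_ne_zero hx hDx

variable [NormedRing A] [NormedAlgebra ℂ A] {D : ℂ → A} {s : Set ℝ} {y : ℝ}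

theorem PeriodicHolomorphicOn.complexCocycle (hD : PeriodicHolomorphicOn D s) (n : ℕ) :
    PeriodicHolomorphicOn (complexCocycle D β n) s := by
  induction n with
  | zero => exact ⟨differentiableOn_const 1, fun _ _ => rfl⟩
  | succ n ih => exact (ih.comp_add_ofReal β).mul hD

theorem subadditive_logMean_complexCocycle [CompleteSpace A] (hD : PeriodicHolomorphicOn D s)
    (hs : IsOpen s) (hy : y ∈ s)
    (hne : ∀ n, ∀ᵐ x : ℝ, complexCocycle D β n ((x : ℂ) + (y : ℂ) * I) ≠ 0) :
    Subadditive fun n => logMean (complexCocycle D β n) y := fun m n => by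
  have hm := hD.complexCocycle (β := β) m
  beta_reduce
  rw [← logMean_comp_add_ofReal (hm.periodic_line hy) (n * β), funext (complexCocycle_add D m n)]
  refine logMean_mul_le (hm.comp_add_ofReal _).differentiableOn
    (hD.complexCocycle n).differentiableOn hs hy ?_
  simpa only [complexCocycle_add] using hne (m + n)

theorem logMean_complexCocycle {f : ℂ → ℂ} (hf : PeriodicHolomorphicOn f s) (hs : IsOpen s)
    (hy : y ∈ s) (hne : ∀ᵐ x : ℝ, f ((x : ℂ) + (y : ℂ) * I) ≠ 0) (n : ℕ) :
    logMean (complexCocycle f β n) y = n * logMean f y := by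
  induction n with
  | zero => simp [complexCocycle, logMean]
  | succ n ih =>
    have hn := hf.complexCocycle (β := β) n
    have hmul := logMean_mul (hn.comp_add_ofReal β).differentiableOn hf.differentiableOn hs hy
      (ae_complexCocycle_ne_zero hne (n + 1))
    rw [logMean_comp_add_ofReal (hn.periodic_line hy), ih] at hmul
    rw [Nat.cast_add_one, add_one_mul]
    exact hmul

end Cocycle

section Matrix

theorem two_mul_norm_det_fin_two_le {𝕜 : Type*} [NormedField 𝕜] (M : Matrix (Fin 2) (Fin 2) 𝕜) :
    2 * ‖M.det‖ ≤ ‖M‖ ^ 2 := by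
  have hM : ‖M‖ ^ 2 = ‖M 0 0‖ ^ 2 + ‖M 0 1‖ ^ 2 + (‖M 1 0‖ ^ 2 + ‖M 1 1‖ ^ 2) := by
    rw [Matrix.frobenius_norm_def, ← Real.sqrt_eq_rpow, Real.sq_sqrt (by positivity)]
    simp [Fin.sum_univ_two]
  calc 2 * ‖M.det‖ ≤ 2 * (‖M 0 0‖ * ‖M 1 1‖ + ‖M 0 1‖ * ‖M 1 0‖) := by
        rw [Matrix.det_fin_two, ← norm_mul, ← norm_mul]
        gcongr
        exact norm_sub_le _ _
    _ ≤ ‖M‖ ^ 2 := by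
        rw [hM]
        linarith [two_mul_le_add_sq ‖M 0 0‖ ‖M 1 1‖, two_mul_le_add_sq ‖M 0 1‖ ‖M 1 0‖]

variable {D : ℂ → Matrix (Fin 2) (Fin 2) ℂ} {β : ℝ} {s : Set ℝ} {y : ℝ}

theorem PeriodicHolomorphicOn.det (hD : PeriodicHolomorphicOn D s) :
    PeriodicHolomorphicOn (fun z => (D z).det) s where
  differentiableOn := by
    have hentry : ∀ i j, DifferentiableOn ℂ (fun z => D z i j) (im ⁻¹' s) := fun i j =>
      (LinearMap.toContinuousLinearMap
        (Matrix.entryLinearMap ℂ ℂ i j)).differentiable.comp_differentiableOn hD.differentiableOn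
    simp only [Matrix.det_fin_two]
    exact ((hentry 0 0).mul (hentry 1 1)).sub ((hentry 0 1).mul (hentry 1 0))
  map_add_one z hz := by rw [hD.map_add_one z hz]

theorem PeriodicHolomorphicOn.matrix_complexCocycle (hD : PeriodicHolomorphicOn D s) (n : ℕ) :
    PeriodicHolomorphicOn (_root_.complexCocycle D β n) s :=
  letI := Matrix.frobeniusNormedRing (m := Fin 2) (α := ℂ)
  letI := Matrix.frobeniusNormedAlgebra (m := Fin 2) (R := ℂ) (α := ℂ)
  hD.complexCocycle n

theorem logMean_det_le (hD : PeriodicHolomorphicOn D s) (hs : IsOpen s) (hy : y ∈ s)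
    (hne : ∀ᵐ x : ℝ, (D ((x : ℂ) + (y : ℂ) * I)).det ≠ 0) :
    logMean (fun z => (D z).det) y ≤ 2 * logMean D y := by
  rw [logMean, logMean, ← intervalIntegral.integral_const_mul]
  refine intervalIntegral.integral_mono_ae zero_le_one
    (intervalIntegrable_log_norm_line hD.det.differentiableOn hs hy)
    ((intervalIntegrable_log_norm_line hD.differentiableOn hs hy).const_mul 2) ?_
  filter_upwards [hne] with x hx
  have hle := two_mul_norm_det_fin_two_le (D ((x : ℂ) + (y : ℂ) * I))
  calc Real.log ‖(D ((x : ℂ) + (y : ℂ) * I)).det‖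
      ≤ Real.log (‖D ((x : ℂ) + (y : ℂ) * I)‖ ^ 2) :=
        Real.log_le_log (norm_pos_iff.2 hx) (by linarith [norm_nonneg (D (x + y * I)).det])
    _ = 2 * Real.log ‖D ((x : ℂ) + (y : ℂ) * I)‖ := by rw [Real.log_pow, Nat.cast_two]

theorem det_complexCocycle (n : ℕ) (z : ℂ) :
    (complexCocycle D β n z).det = complexCocycle (fun w => (D w).det) β n z :=
  map_complexCocycle Matrix.detMonoidHom D n z

theorem ae_det_complexCocycle_ne_zero (hne : ∀ᵐ x : ℝ, (D ((x : ℂ) + (y : ℂ) * I)).det ≠ 0)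
    (n : ℕ) : ∀ᵐ x : ℝ, (complexCocycle D β n ((x : ℂ) + (y : ℂ) * I)).det ≠ 0 := by
  simpa only [det_complexCocycle] using ae_complexCocycle_ne_zero hne n

theorem ae_matrix_complexCocycle_ne_zero
    (hne : ∀ᵐ x : ℝ, (D ((x : ℂ) + (y : ℂ) * I)).det ≠ 0) (n : ℕ) :
    ∀ᵐ x : ℝ, complexCocycle D β n ((x : ℂ) + (y : ℂ) * I) ≠ 0 :=
  (ae_det_complexCocycle_ne_zero hne n).mono fun _ hx h => hx (h ▸ Matrix.det_zero)

theorem subadditive_logMean_matrix_complexCocycle (hD : PeriodicHolomorphicOn D s)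
    (hs : IsOpen s) (hy : y ∈ s) (hne : ∀ᵐ x : ℝ, (D ((x : ℂ) + (y : ℂ) * I)).det ≠ 0) :
    Subadditive fun n => logMean (complexCocycle D β n) y :=
  letI := Matrix.frobeniusNormedRing (m := Fin 2) (α := ℂ)
  letI := Matrix.frobeniusNormedAlgebra (m := Fin 2) (R := ℂ) (α := ℂ)
  subadditive_logMean_complexCocycle hD hs hy (ae_matrix_complexCocycle_ne_zero hne)

theorem bddBelow_logMean_complexCocycle_div (hD : PeriodicHolomorphicOn D s) (hs : IsOpen s)
    (hy : y ∈ s) (hne : ∀ᵐ x : ℝ, (D ((x : ℂ) + (y : ℂ) * I)).det ≠ 0) :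
    BddBelow (Set.range fun n : ℕ => logMean (complexCocycle D β n) y / n) := by
  refine ⟨min 0 (logMean (fun z => (D z).det) y / 2), ?_⟩
  rintro _ ⟨n, rfl⟩
  rcases n.eq_zero_or_pos with rfl | hn
  · simp
  have hdet := logMean_det_le (hD.matrix_complexCocycle n) hs hy
    (ae_det_complexCocycle_ne_zero (β := β) hne n)
  rw [funext (det_complexCocycle n), logMean_complexCocycle hD.det hs hy hne] at hdet
  refine (min_le_right _ _).trans ?_
  rw [le_div_iff₀ (Nat.cast_pos.2 hn)]
  linarith

theorem exists_lyapunov_eq_coe_and_tendsto (hD : PeriodicHolomorphicOn D s) (hs : IsOpen s)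
    (hy : y ∈ s) (hne : ∀ᵐ x : ℝ, (D ((x : ℂ) + (y : ℂ) * I)).det ≠ 0) :
    ∃ L : ℝ, lyapunov β (fun x : ℝ => D ((x : ℂ) + (y : ℂ) * I)) = L ∧
      Tendsto (fun n : ℕ => logMean (complexCocycle D β n) y / n) atTop (nhds L) := by
  have hsub := subadditive_logMean_matrix_complexCocycle (β := β) hD hs hy hne
  have hbdd := bddBelow_logMean_complexCocycle_div (β := β) hD hs hy hne
  refine ⟨hsub.lim, ?_, hsub.tendsto_lim hbdd⟩
  rw [lyapunov, ← iInf_coe_div_eq_coe_subadditive_lim hsub hbdd]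
  refine iInf_congr fun n => ?_
  have hcocycle_ne := ae_restrict_of_ae (s := Set.Ioc 0 1)
    (ae_matrix_complexCocycle_ne_zero (β := β) hne (n + 1))
  simp only [cocycleIter_line]
  rw [logIntegral_eq_coe_integral
    (intervalIntegrable_log_norm_line (hD.matrix_complexCocycle _).differentiableOn hs hy)
    (hcocycle_ne.mono fun x hx => norm_ne_zero_iff.2 hx), ← EReal.coe_mul, ← logMean,
    div_eq_inv_mul, Nat.cast_add_one]

end Matrix

/-- For any frequency `β`, if `D` is 1-periodic and holomorphic on the strip
`|Im z| < δ` with `det D` not identically zero, then `ε ↦ L(β, D_ε)` is finite on `(-δ, δ)`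
and convex there. -/
theorem lyapunov_finite_convex_in_strip
    (β δ : ℝ) (hδ : 0 < δ) (D : ℂ → Matrix (Fin 2) (Fin 2) ℂ)
    (hD : DifferentiableOn ℂ D {z : ℂ | |z.im| < δ})
    (hper : ∀ z : ℂ, |z.im| < δ → D (z + 1) = D z)
    (hdet : ∃ z : ℂ, |z.im| < δ ∧ (D z).det ≠ 0) :
    (∀ ε ∈ Set.Ioo (-δ) δ,
        lyapunov β (fun x : ℝ => D ((x : ℂ) + (ε : ℂ) * Complex.I)) ≠ ⊥ ∧
        lyapunov β (fun x : ℝ => D ((x : ℂ) + (ε : ℂ) * Complex.I)) ≠ ⊤) ∧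
    ConvexOn ℝ (Set.Ioo (-δ) δ)
      (fun ε : ℝ => (lyapunov β (fun x : ℝ => D ((x : ℂ) + (ε : ℂ) * Complex.I))).toReal) := by
  have hstrip : {z : ℂ | |z.im| < δ} = im ⁻¹' Set.Ioo (-δ) δ := by
    ext z
    exact abs_lt (a := z.im)
  have hDs : PeriodicHolomorphicOn D (Set.Ioo (-δ) δ) :=
    ⟨hstrip ▸ hD, fun z hz => hper z (abs_lt.2 hz)⟩
  have hdet_line : ∀ ε ∈ Set.Ioo (-δ) δ, ∀ᵐ x : ℝ, (D ((x : ℂ) + (ε : ℂ) * I)).det ≠ 0 :=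
    fun ε hε => ae_ne_zero_line hDs.det.differentiableOn isOpen_Ioo (convex_Ioo _ _)
      (hdet.imp fun z hz => ⟨abs_lt.1 hz.1, hz.2⟩) hε
  choose! L hL hlim using fun ε hε =>
    exists_lyapunov_eq_coe_and_tendsto (β := β) hDs isOpen_Ioo hε (hdet_line ε hε)
  refine ⟨fun ε hε => hL ε hε ▸ ⟨EReal.coe_ne_bot _, EReal.coe_ne_top _⟩, ?_⟩
  have hconv : ∀ n, ConvexOn ℝ (Set.Ioo (-δ) δ) (logMean (complexCocycle D β n)) := fun n =>
    (hDs.matrix_complexCocycle n).convexOn_logMean isOpen_Ioo (convex_Ioo _ _) fun ε hε =>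
      ae_matrix_complexCocycle_ne_zero (hdet_line ε hε) n
  refine convexOn_of_tendsto (l := atTop)
    (fun n : ℕ => (hconv n).smul (inv_nonneg.2 n.cast_nonneg)) fun ε hε => ?_
  rw [hL ε hε, EReal.toReal_coe]
  simpa only [smul_eq_mul, inv_mul_eq_div] using hlim ε hε
end
end
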